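/- arXiv:2509.22142 — 2 statements merged into one kernel-verified Lean document; each statement's English description precedes it below -/
import Mathlib

section
/- Let P ⊆ ℤ^n_{≥0} be a polymatroid over [n] with rank function f and let g = Σ_{i'∈[n]} f({i'}) − f([n]). Then for every k ≤ n−1, the following are equivalent: (1) [x^i]I_P(x) = C(g+i−1, i) for all i ≤ k; (2) Σ_{i'∈J} f({i'}) = f(J) for all J ⊆ [n] with |J| = k. Here C(·,·) denotes the binomial coefficient. -/
open Finset Polynomial

/-- `f` is the rank function of a polymatroid over the ground set `[n]` (encoded as `Fin n`):
normalization, monotonicity and submodularity. -/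
def IsPolymatroidRank (n : ℕ) (f : Finset (Fin n) → ℕ) : Prop :=
  f ∅ = 0 ∧ (∀ I J : Finset (Fin n), I ⊆ J → f I ≤ f J) ∧
    ∀ I J : Finset (Fin n), f (I ∪ J) + f (I ∩ J) ≤ f I + f J

/-- The set of bases of the polymatroid `P ⊆ ℤ^n_{≥0}` with rank function `f`:
all nonnegative integer vectors `a` with `∑_{i ∈ I} a i ≤ f I` for every `I ⊆ [n]`
and `∑_{i ∈ [n]} a i = f [n]`.  (Every such vector has entries `≤ f [n]`, whence the
bounding box used to produce a `Finset`.) -/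
def polyBases (n : ℕ) (f : Finset (Fin n) → ℕ) : Finset (Fin n → ℤ) :=
  ((Finset.univ : Finset (Fin n → Fin (f Finset.univ + 1))).image
      (fun a i => ((a i : ℕ) : ℤ))).filter
    fun a => (∀ i, 0 ≤ a i) ∧ (∀ I : Finset (Fin n), ∑ i ∈ I, a i ≤ (f I : ℤ)) ∧
      ∑ i, a i = (f Finset.univ : ℤ)

/-- The externally active indices of a basis `a`: those `i` such that
`a + e_i - e_j ∉ P` for every `j < i`. -/
def extAct (n : ℕ) (f : Finset (Fin n) → ℕ) (a : Fin n → ℤ) : Finset (Fin n) :=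
  Finset.univ.filter fun i => ∀ j, j < i →
    (fun t => a t + (if t = i then 1 else 0) - (if t = j then 1 else 0)) ∉ polyBases n f

/-- The internally active indices of a basis `a`: those `i` such that
`a - e_i + e_j ∉ P` for every `j < i`. -/
def intAct (n : ℕ) (f : Finset (Fin n) → ℕ) (a : Fin n → ℤ) : Finset (Fin n) :=
  Finset.univ.filter fun i => ∀ j, j < i →
    (fun t => a t - (if t = i then 1 else 0) + (if t = j then 1 else 0)) ∉ polyBases n f

/-- The exterior polynomial `X_P(y) = ∑_{a ∈ P} y^(n - |Ext(a)|)`. -/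
noncomputable def exteriorPoly (n : ℕ) (f : Finset (Fin n) → ℕ) : Polynomial ℤ :=
  ∑ a ∈ polyBases n f, X ^ (n - (extAct n f a).card)

/-- The interior polynomial `I_P(x) = ∑_{a ∈ P} x^(n - |Int(a)|)`. -/
noncomputable def interiorPoly (n : ℕ) (f : Finset (Fin n) → ℕ) : Polynomial ℤ :=
  ∑ a ∈ polyBases n f, X ^ (n - (intAct n f a).card)

/-- `r_k(P) = min { n - |F| : F ⊆ [n], f F ≤ f [n] - k }` (junk value `0` if no such `F`). -/
noncomputable def rk (n : ℕ) (f : Finset (Fin n) → ℕ) (k : ℕ) : ℕ :=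
  sInf {m | ∃ F : Finset (Fin n), (f F : ℤ) ≤ (f Finset.univ : ℤ) - k ∧ m = n - F.card}

/-- `r'_k(P) = min { |F| : F ⊆ [n], ∑_{i ∈ F} f {i} - f F ≥ k }` (junk value `0` if no such `F`). -/
noncomputable def rk' (n : ℕ) (f : Finset (Fin n) → ℕ) (k : ℕ) : ℕ :=
  sInf {m | ∃ F : Finset (Fin n), (k : ℤ) ≤ (∑ i ∈ F, (f {i} : ℤ)) - (f F : ℤ) ∧ m = F.card}

/-- `H_j(P)`: the flats `H` (i.e. `f (H ∪ {e}) > f H` for all `e ∉ H`) with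
`f H = f [n] - 1` and `n - |H| = j`. -/
def Hset (n : ℕ) (f : Finset (Fin n) → ℕ) (j : ℕ) : Finset (Finset (Fin n)) :=
  Finset.univ.filter fun H =>
    (∀ e, e ∉ H → f H < f (insert e H)) ∧ (f H : ℤ) = (f Finset.univ : ℤ) - 1 ∧
      n - H.card = j

/-- `C_j(P)`: the sets `C` with `|C| = j`, `∑_{i ∈ C} f {i} - f C = 1` and
`∑_{i ∈ C \ {j'}} f {i} = f (C \ {j'})` for every `j' ∈ C`. -/
def Cset (n : ℕ) (f : Finset (Fin n) → ℕ) (j : ℕ) : Finset (Finset (Fin n)) :=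
  Finset.univ.filter fun C => C.card = j ∧
    (∑ i ∈ C, (f {i} : ℤ)) - (f C : ℤ) = 1 ∧
    ∀ j' ∈ C, (∑ i ∈ C.erase j', (f {i} : ℤ)) = (f (C.erase j') : ℤ)

/-- The dual rank function `f*(I) = f([n] \ I) - f([n]) + ∑_{i ∈ I} f {i}`
(the subtraction is exact for a polymatroid rank function). -/
def fdual (n : ℕ) (f : Finset (Fin n) → ℕ) : Finset (Fin n) → ℕ :=
  fun I => f (Finset.univ \ I) + (∑ i ∈ I, f {i}) - f Finset.univ

/-- Independence of an integer vector: all the rank inequalities hold. -/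
def Indep {n : ℕ} (f : Finset (Fin n) → ℕ) (b : Fin n → ℤ) : Prop :=
  ∀ J : Finset (Fin n), ∑ i ∈ J, b i ≤ (f J : ℤ)

lemma mem_polyBases_iff {n : ℕ} {f : Finset (Fin n) → ℕ} (hf : IsPolymatroidRank n f)
    (a : Fin n → ℤ) :
    a ∈ polyBases n f ↔ Indep f a ∧ ∑ i, a i = (f univ : ℤ) := by
  constructor
  · intro h
    simp only [polyBases, mem_filter] at h
    exact ⟨h.2.2.1, h.2.2.2⟩
  · rintro ⟨h1, h2⟩
    have h0 : ∀ i, 0 ≤ a i := by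
      intro i
      have h3 := h1 (univ.erase i)
      have h4 := hf.2.1 (univ.erase i) univ (subset_univ _)
      have h5 := Finset.add_sum_erase univ a (mem_univ i)
      have : (f (univ.erase i) : ℤ) ≤ f univ := by exact_mod_cast h4
      linarith
    simp only [polyBases, mem_filter, mem_image, mem_univ, true_and]
    refine ⟨?_, h0, h1, h2⟩
    have hle : ∀ i, a i ≤ f univ := by
      intro i
      rw [← h2]
      exact Finset.single_le_sum (fun j _ => h0 j) (mem_univ i)
    refine ⟨fun i => ⟨(a i).toNat, ?_⟩, ?_⟩
    · have := h0 i; have := hle i; omega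
    · funext i
      have := h0 i
      simp [this]

lemma tight_inter_union {n : ℕ} {f : Finset (Fin n) → ℕ} (hf : IsPolymatroidRank n f)
    {b : Fin n → ℤ} (hb : Indep f b) {I J : Finset (Fin n)}
    (hI : ∑ i ∈ I, b i = (f I : ℤ)) (hJ : ∑ i ∈ J, b i = (f J : ℤ)) :
    ∑ i ∈ I ∪ J, b i = (f (I ∪ J) : ℤ) ∧ ∑ i ∈ I ∩ J, b i = (f (I ∩ J) : ℤ) := by
  have h1 := hb (I ∪ J)
  have h2 := hb (I ∩ J)
  have h3 : ((f (I ∪ J) + f (I ∩ J) : ℕ) : ℤ) ≤ ((f I + f J : ℕ) : ℤ) := by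
    exact_mod_cast hf.2.2 I J
  have h4 := Finset.sum_union_inter (s₁ := I) (s₂ := J) (f := b)
  push_cast at h3
  constructor <;> linarith

lemma indep_augment {n : ℕ} {f : Finset (Fin n) → ℕ} (hf : IsPolymatroidRank n f)
    {b : Fin n → ℤ} (hb : Indep f b) (hlt : ∑ i, b i < (f univ : ℤ)) :
    ∃ j, Indep f (fun t => b t + (if t = j then 1 else 0)) := by
  by_contra hcon
  push Not at hcon
  have key : ∀ j, ∃ J : Finset (Fin n), j ∈ J ∧ ∑ i ∈ J, b i = (f J : ℤ) := by
    intro j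
    have h := hcon j
    unfold Indep at h
    push Not at h
    obtain ⟨J, hJ⟩ := h
    refine ⟨J, ?_⟩
    have h1 := hb J
    simp only [sum_add_distrib, sum_ite_eq'] at hJ
    split_ifs at hJ with h2
    · exact ⟨h2, by omega⟩
    · omega
  choose T hT1 hT2 using key
  have hU : ∀ s : Finset (Fin n), ∑ i ∈ s.biUnion T, b i = (f (s.biUnion T) : ℤ) := by
    intro s
    induction s using Finset.induction_on with
    | empty => simp [hf.1]
    | insert x s hx ih =>
      rw [biUnion_insert]
      exact (tight_inter_union hf hb (hT2 x) ih).1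
  have : (univ : Finset (Fin n)).biUnion T = univ := by
    ext x; simp only [mem_biUnion, mem_univ, true_and, iff_true]; exact ⟨x, hT1 x⟩
  have h := hU univ
  rw [this] at h
  omega

lemma exists_basis_ge {n : ℕ} {f : Finset (Fin n) → ℕ} (hf : IsPolymatroidRank n f)
    (t : ℕ) : ∀ b : Fin n → ℤ, Indep f b → ∑ i, b i + t = (f univ : ℤ) →
    ∃ a ∈ polyBases n f, ∀ i, b i ≤ a i := by
  induction t with
  | zero =>
    intro b hb hs
    exact ⟨b, (mem_polyBases_iff hf b).2 ⟨hb, by simpa using hs⟩, fun i => le_rfl⟩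
  | succ t ih =>
    intro b hb hs
    obtain ⟨j, hj⟩ := indep_augment hf hb (by push_cast at hs; omega)
    obtain ⟨a, ha, hle⟩ := ih _ hj (by
      simp only [sum_add_distrib, sum_ite_eq', mem_univ, if_true]
      push_cast at hs; omega)
    refine ⟨a, ha, fun i => ?_⟩
    have := hle i
    split_ifs at this <;> omega

lemma basis_exchange {n : ℕ} {f : Finset (Fin n) → ℕ} (hf : IsPolymatroidRank n f)
    {a a' : Fin n → ℤ} (ha : a ∈ polyBases n f) (ha' : a' ∈ polyBases n f)
    {j : Fin n} (hj : a j < a' j) :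
    ∃ i, a' i < a i ∧
      (fun t => a t - (if t = i then 1 else 0) + (if t = j then 1 else 0)) ∈ polyBases n f := by
  classical
  obtain ⟨hb, hs⟩ := (mem_polyBases_iff hf a).1 ha
  obtain ⟨hb', hs'⟩ := (mem_polyBases_iff hf a').1 ha'
  obtain ⟨D, hD, hmin⟩ := Finset.exists_min_image
    (univ.filter fun J : Finset (Fin n) => j ∈ J ∧ ∑ i ∈ J, a i = (f J : ℤ))
    Finset.card ⟨univ, by simp [hs]⟩
  simp only [mem_filter, mem_univ, true_and] at hD hmin
  obtain ⟨i, hiD, hi⟩ : ∃ i ∈ D, a' i < a i := by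
    by_contra hcon
    push Not at hcon
    have h1 := Finset.sum_lt_sum hcon ⟨j, hD.1, hj⟩
    have h2 := hb' D
    omega
  refine ⟨i, hi, (mem_polyBases_iff hf _).2 ⟨?_, ?_⟩⟩
  · intro J
    simp only [sum_add_distrib, sum_sub_distrib, sum_ite_eq']
    have h1 := hb J
    by_cases hjJ : j ∈ J <;> by_cases hiJ : i ∈ J <;> simp only [hjJ, hiJ, if_true, if_false]
    · omega
    · by_contra hcon
      have ht : ∑ i ∈ J, a i = (f J : ℤ) := by omega
      have h2 := hmin (D ∩ J) ⟨by simp [hD.1, hjJ], (tight_inter_union hf hb hD.2 ht).2⟩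
      have h3 : (D ∩ J).card < D.card := by
        apply Finset.card_lt_card
        rw [Finset.ssubset_iff_of_subset inter_subset_left]
        exact ⟨i, hiD, by simp [hiJ]⟩
      omega
    · omega
    · omega
  · simp only [sum_add_distrib, sum_sub_distrib, sum_ite_eq', mem_univ, if_true]
    omega

lemma mem_intAct_iff {n : ℕ} {f : Finset (Fin n) → ℕ} {a : Fin n → ℤ} {i : Fin n} :
    i ∈ intAct n f a ↔ ∀ j, j < i →
    (fun t => a t - (if t = i then 1 else 0) + (if t = j then 1 else 0)) ∉ polyBases n f := by
  simp [intAct]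

lemma decomp_exists {n : ℕ} {f : Finset (Fin n) → ℕ} (hf : IsPolymatroidRank n f)
    (t : ℕ) (b : Fin n → ℤ) (hb : Indep f b) (hs : ∑ i, b i + t = (f univ : ℤ)) :
    ∃ a ∈ polyBases n f, (∀ i, b i ≤ a i) ∧ ∀ i, b i < a i → i ∈ intAct n f a := by
  classical
  obtain ⟨a0, ha0, hle0⟩ := exists_basis_ge hf t b hb hs
  obtain ⟨a, ha, hmax⟩ := Finset.exists_max_image
    ((polyBases n f).filter fun a => ∀ i, b i ≤ a i) (fun a => toLex a)
    ⟨a0, by simp [ha0, hle0]⟩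
  simp only [mem_filter] at ha hmax
  refine ⟨a, ha.1, ha.2, fun i hi => mem_intAct_iff.2 fun j hj hmem => ?_⟩
  have h := hmax _ ⟨hmem, fun l => by
    have h1 := ha.2 l
    by_cases hl : l = i
    · subst hl
      have : l ≠ j := hj.ne'
      simp only [this, if_true, if_false]; omega
    · simp only [hl, if_false]
      split_ifs <;> omega⟩
  refine absurd h (not_le.2 ⟨j, fun l hl => ?_, ?_⟩)
  · have h1 : l ≠ j := hl.ne
    have h2 : l ≠ i := (hl.trans hj).ne
    simp [h1, h2]
  · have h2 : j ≠ i := hj.ne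
    simp [h2]

lemma decomp_unique {n : ℕ} {f : Finset (Fin n) → ℕ} (hf : IsPolymatroidRank n f)
    (b a a' : Fin n → ℤ) (ha : a ∈ polyBases n f) (ha' : a' ∈ polyBases n f)
    (hb' : ∀ i, b i ≤ a' i)
    (h : ∀ i, b i < a i → i ∈ intAct n f a) : ¬ (toLex a < toLex a') := by
  rintro ⟨j, hj1, hj2⟩
  obtain ⟨i, hi, hmem⟩ := basis_exchange hf ha ha' hj2
  have hji : j < i := by
    rcases lt_trichotomy j i with h1 | h1 | h1
    · exact h1
    · subst h1; exact absurd hj2 (not_lt.2 hi.le)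
    · have : a i = a' i := hj1 i h1
      omega
  exact mem_intAct_iff.1 (h i (lt_of_le_of_lt (hb' i) hi)) j hji hmem

lemma card_piAntidiag_nat {ι : Type*} [DecidableEq ι] (s : Finset ι) (t : ℕ) :
    (piAntidiag s t).card = (s.card).multichoose t := by
  rw [← card_finsuppAntidiag_nat_eq_multichoose]
  simp [finsuppAntidiag]

open Classical in
/-- The complementary vectors of total `g + t` below the polymatroid. -/
noncomputable def Qset (n : ℕ) (f : Finset (Fin n) → ℕ) (m : ℕ) : Finset (Fin n → ℕ) :=
  (piAntidiag univ m).filter fun c => Indep f (fun i => (f {i} : ℤ) - c i)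

lemma card_Qset {n : ℕ} {f : Finset (Fin n) → ℕ} (hf : IsPolymatroidRank n f)
    (g : ℕ) (hg : g + f Finset.univ = ∑ i : Fin n, f {i}) (t : ℕ) :
    (Qset n f (g + t)).card =
      ∑ a ∈ polyBases n f, ((intAct n f a).card).multichoose t := by
  classical
  simp only [← card_piAntidiag_nat]
  rw [← Finset.card_sigma]
  symm
  have hg' : (g : ℤ) + f univ = ∑ i : Fin n, (f {i} : ℤ) := by exact_mod_cast hg
  have hub : ∀ a ∈ polyBases n f, ∀ i, a i ≤ f {i} := by
    intro a ha i
    have := ((mem_polyBases_iff hf a).1 ha).1 {i}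
    simpa using this
  refine Finset.card_bij (fun p _ => fun i => ((f {i} : ℤ) - p.1 i).toNat + p.2 i) ?_ ?_ ?_
  · rintro ⟨a, v⟩ hp
    simp only [mem_sigma, mem_piAntidiag] at hp
    obtain ⟨ha, hv, hv'⟩ := hp
    obtain ⟨h1, h2⟩ := (mem_polyBases_iff hf a).1 ha
    have hv2 : ∑ i, v i = t := by
      rw [← hv]; symm
      apply Finset.sum_subset (subset_univ _)
      intro i _ hi
      by_contra h
      exact hi (hv' i h)
    have hc : ∀ i, (((f {i} - a i).toNat : ℕ) : ℤ) = f {i} - a i := fun i =>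
      Int.toNat_of_nonneg (by have := hub a ha i; omega)
    simp only [Qset, mem_filter, mem_piAntidiag, mem_univ, implies_true, and_true]
    constructor
    · zify
      simp only [hc]
      rw [sum_add_distrib, sum_sub_distrib, h2, ← hg']
      have : (∑ i, (v i : ℤ)) = t := by exact_mod_cast hv2
      rw [this]; ring
    · intro J
      refine le_trans (Finset.sum_le_sum fun i _ => ?_) (h1 J)
      push_cast [hc]
      omega
  · rintro ⟨a, v⟩ hp ⟨a', v'⟩ hp' heq
    simp only [mem_sigma, mem_piAntidiag] at hp hp'
    obtain ⟨ha, hv, hv'⟩ := hp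
    obtain ⟨ha2, hv2, hv2'⟩ := hp'
    have he : ∀ i, a i - v i = a' i - v' i := by
      intro i
      have h1 := congrFun heq i
      simp only at h1
      have := hub a ha i
      have := hub a' ha2 i
      omega
    have haa : a = a' := by
      by_contra hne
      rcases lt_trichotomy (toLex a) (toLex a') with h | h | h
      · exact decomp_unique hf (fun i => a i - v i) a a' ha ha2
          (fun i => by have := he i; omega)
          (fun i hi => hv' i (by omega)) h
      · exact hne (toLex.injective h)
      · exact decomp_unique hf (fun i => a i - v i) a' a ha2 ha
          (fun i => by omega)
          (fun i hi => hv2' i (by have := he i; omega)) h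
    subst haa
    have : v = v' := by
      funext i
      have := he i
      omega
    subst this
    rfl
  · intro c hc
    simp only [Qset, mem_filter, mem_piAntidiag, mem_univ, implies_true, and_true] at hc
    obtain ⟨hsum, hind⟩ := hc
    have hsum' : ∑ i, (c i : ℤ) = g + t := by exact_mod_cast hsum
    obtain ⟨a, ha, hle, hact⟩ := decomp_exists hf t _ hind (by
      rw [sum_sub_distrib, hsum', ← hg']; ring)
    refine ⟨⟨a, fun i => (a i - (f {i} - c i)).toNat⟩, ?_, ?_⟩
    · simp only [mem_sigma, mem_piAntidiag]
      have hz : ∀ i, (a i - ((f {i} : ℤ) - c i)).toNat ≠ 0 → i ∈ intAct n f a := by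
        intro i hi
        exact hact i (by omega)
      refine ⟨ha, ?_, hz⟩
      rw [Finset.sum_subset (subset_univ _) (fun i _ hi => by
        by_contra h
        exact hi (hz i h))]
      have hc : ∀ i, (((a i - ((f {i} : ℤ) - c i)).toNat : ℕ) : ℤ) = a i - (f {i} - c i) :=
        fun i => Int.toNat_of_nonneg (by have := hle i; omega)
      zify
      simp only [hc]
      rw [sum_sub_distrib, sum_sub_distrib, hsum', ← hg', ((mem_polyBases_iff hf a).1 ha).2]
      ring
    · funext i
      have := hle i
      have := hub a ha i
      simp only
      omega

lemma multichoose_vandermonde (a b m : ℕ) :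
    (a + b).multichoose m = ∑ p ∈ antidiagonal m, a.multichoose p.1 * b.multichoose p.2 := by
  induction a generalizing m with
  | zero =>
    cases m with
    | zero => simp
    | succ m => rw [Finset.Nat.sum_antidiagonal_succ]; simp
  | succ a iha =>
    induction m with
    | zero => simp
    | succ m ihm =>
      have h := iha (m + 1)
      rw [Finset.Nat.sum_antidiagonal_succ] at h ⊢
      simp only [Nat.multichoose_succ_succ, add_mul, sum_add_distrib, Nat.multichoose_zero_right]
        at h ⊢
      rw [show a + 1 + b = (a + b) + 1 by ring, Nat.multichoose_succ_succ, h,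
        show (a + b) + 1 = a + 1 + b by ring, ihm]
      ring

lemma multichoose_eq_choose' (m t : ℕ) (hm : 1 ≤ m) :
    m.multichoose t = (t + (m - 1)).choose (m - 1) := by
  rw [Nat.multichoose_eq, show m + t - 1 = t + (m - 1) by omega]
  rw [Nat.choose_symm_add]

lemma total_identity (n g t : ℕ) (hn : 1 ≤ n) :
    n.multichoose (g + t) =
      ∑ i ∈ range n, (g + i - 1).choose i * (t + (n - 1 - i)).choose (n - 1 - i) := by
  have h := multichoose_vandermonde g (t + 1) (n - 1)
  rw [Finset.Nat.sum_antidiagonal_eq_sum_range_succ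
    (fun i j => g.multichoose i * (t + 1).multichoose j), Nat.succ_eq_add_one, Nat.sub_add_cancel hn] at h
  rw [multichoose_eq_choose' n _ hn]
  rw [Nat.multichoose_eq, show g + (t + 1) + (n - 1) - 1 = g + t + (n - 1) by omega] at h
  rw [h]
  refine Finset.sum_congr rfl fun i _ => ?_
  rw [Nat.multichoose_eq, Nat.multichoose_eq]
  congr 2
  omega

lemma intAct_card_pos {n : ℕ} (f : Finset (Fin n) → ℕ) (hn : 1 ≤ n) (a : Fin n → ℤ) :
    1 ≤ (intAct n f a).card := by
  apply Finset.card_pos.2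
  refine ⟨⟨0, hn⟩, mem_intAct_iff.2 fun j hj => ?_⟩
  exact absurd hj (by simp [Fin.lt_def])

lemma sum_multichoose_intAct {n : ℕ} (f : Finset (Fin n) → ℕ) (hn : 1 ≤ n) (t : ℕ) :
    ((∑ a ∈ polyBases n f, ((intAct n f a).card).multichoose t : ℕ) : ℤ) =
      ∑ i ∈ range n, (interiorPoly n f).coeff i *
        ((t + (n - 1 - i)).choose (n - 1 - i) : ℕ) := by
  simp only [interiorPoly, finsetSum_coeff, coeff_X_pow, sum_mul]
  rw [Finset.sum_comm]
  push_cast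
  refine Finset.sum_congr rfl fun a _ => ?_
  have h1 := intAct_card_pos f hn a
  have h2 : (intAct n f a).card ≤ n := by simpa using Finset.card_le_univ (intAct n f a)
  rw [Finset.sum_eq_single (n - (intAct n f a).card)]
  · rw [if_pos rfl, one_mul, multichoose_eq_choose' _ _ h1,
      show n - 1 - (n - (intAct n f a).card) = (intAct n f a).card - 1 by omega]
  · intro i _ hi
    simp [hi]
  · intro h
    simp only [mem_range] at h
    omega

open Classical in
/-- The complementary vectors violating some inequality. -/
noncomputable def Bset (n : ℕ) (f : Finset (Fin n) → ℕ) (m : ℕ) : Finset (Fin n → ℕ) :=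
  (piAntidiag univ m).filter fun c => ¬ Indep f (fun i => (f {i} : ℤ) - c i)

/-- The coefficient defects. -/
noncomputable def wt (n : ℕ) (f : Finset (Fin n) → ℕ) (g i : ℕ) : ℤ :=
  ((g + i - 1).choose i : ℤ) - (interiorPoly n f).coeff i

lemma card_Bset {n : ℕ} {f : Finset (Fin n) → ℕ} (hf : IsPolymatroidRank n f) (hn : 1 ≤ n)
    (g : ℕ) (hg : g + f Finset.univ = ∑ i : Fin n, f {i}) (t : ℕ) :
    ((Bset n f (g + t)).card : ℤ) =
      ∑ i ∈ range n, wt n f g i * ((t + (n - 1 - i)).choose (n - 1 - i) : ℕ) := by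
  classical
  have h1 : (Qset n f (g + t)).card + (Bset n f (g + t)).card = n.multichoose (g + t) := by
    have := Finset.card_filter_add_card_filter_not (s := piAntidiag (univ : Finset (Fin n)) (g + t))
      (fun c => Indep f (fun i => (f {i} : ℤ) - c i))
    rw [card_piAntidiag_nat, card_univ, Fintype.card_fin] at this
    rw [← this, Qset, Bset]
  rw [card_Qset hf g hg, total_identity n g t hn] at h1
  have h2 := congrArg (Nat.cast : ℕ → ℤ) h1
  rw [Nat.cast_add, sum_multichoose_intAct f hn] at h2
  simp only [wt, sub_mul, sum_sub_distrib]
  push_cast at h2 ⊢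
  linarith

/-- The polynomial counting `Bset`. -/
noncomputable def Dpoly (n : ℕ) (w : ℕ → ℤ) : Polynomial ℝ :=
  ∑ i ∈ range n, Polynomial.C (w i : ℝ) * preHilbertPoly ℝ (n - 1 - i) 0

lemma eval_preH (d t : ℕ) :
    (preHilbertPoly ℝ d 0).eval (t : ℝ) = ((t + d).choose d : ℕ) := by
  have := preHilbertPoly_eq_choose_sub_add ℝ d (Nat.zero_le t)
  simpa using this

lemma eval_Dpoly (n : ℕ) (w : ℕ → ℤ) (t : ℕ) :
    (Dpoly n w).eval (t : ℝ) =
      ((∑ i ∈ range n, w i * ((t + (n - 1 - i)).choose (n - 1 - i) : ℕ) : ℤ) : ℝ) := by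
  simp only [Dpoly, eval_finsetSum, eval_mul, eval_C, eval_preH]
  push_cast
  rfl

lemma Dpoly_degree_lt (n : ℕ) (w : ℕ → ℤ) (k : ℕ) (hk : k ≤ n - 1) (hn : 1 ≤ n)
    (hw : ∀ i ≤ k, w i = 0) : (Dpoly n w).degree < ((n - 1 - k : ℕ) : WithBot ℕ) := by
  rw [Polynomial.degree_lt_iff_coeff_zero]
  intro m hm
  simp only [Dpoly, finsetSum_coeff, coeff_C_mul]
  refine Finset.sum_eq_zero fun i hi => ?_
  by_cases hik : i ≤ k
  · simp [hw i hik]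
  · rw [Polynomial.coeff_eq_zero_of_natDegree_lt, mul_zero]
    rw [natDegree_preHilbertPoly]
    simp only [mem_range] at hi
    omega

lemma weights_zero (n : ℕ) (w : ℕ → ℤ) (k : ℕ) (hk : k ≤ n - 1) (hn : 1 ≤ n)
    (hD : (Dpoly n w).degree < ((n - 1 - k : ℕ) : WithBot ℕ)) : ∀ i ≤ k, w i = 0 := by
  rw [Polynomial.degree_lt_iff_coeff_zero] at hD
  intro i
  induction i using Nat.strong_induction_on with
  | _ i ih =>
    intro hik
    have h := hD (n - 1 - i) (by omega)
    simp only [Dpoly, finsetSum_coeff, coeff_C_mul] at h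
    rw [Finset.sum_eq_single i] at h
    · rw [coeff_preHilbertPoly_self] at h
      rcases mul_eq_zero.1 h with h | h
      · exact_mod_cast h
      · exact absurd h (inv_ne_zero (by exact_mod_cast Nat.factorial_ne_zero _))
    · intro j hj hji
      simp only [mem_range] at hj
      rcases lt_or_gt_of_ne hji with h1 | h1
      · simp [ih j h1 (by omega)]
      · rw [Polynomial.coeff_eq_zero_of_natDegree_lt, mul_zero]
        rw [natDegree_preHilbertPoly]
        omega
    · intro hi
      simp only [mem_range] at hi
      omega

/-- Domination at all naturals rules out strictly larger degree. -/
lemma not_degree_lt_of_le (p q : Polynomial ℝ) (hq : ∀ t : ℕ, 0 < q.eval (t : ℝ))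
    (h : ∀ t : ℕ, q.eval (t : ℝ) ≤ |p.eval (t : ℝ)|) : ¬ p.degree < q.degree := by
  intro hdeg
  have h1 := (div_tendsto_atTop_zero_of_degree_lt p q hdeg).comp
    (tendsto_natCast_atTop_atTop (R := ℝ))
  have h2 := h1.abs
  rw [abs_zero] at h2
  have h3 := h2.eventually (gt_mem_nhds (zero_lt_one))
  obtain ⟨t, ht⟩ := h3.exists
  simp only [Function.comp] at ht
  rw [abs_div, abs_of_pos (hq t), div_lt_one (hq t)] at ht
  exact absurd (h t) (not_le.2 ht)

lemma degree_lt_of_bound (p : Polynomial ℝ) (K : ℝ) (r : ℕ)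
    (h : ∀ t : ℕ, |p.eval (t : ℝ)| * (t + 1) ≤ K * (t + 1) ^ r) :
    p.degree < (r : WithBot ℕ) := by
  by_contra hcon
  push Not at hcon
  have hp : p ≠ 0 := by
    rintro rfl
    simp at hcon
  set q : Polynomial ℝ := p * (X + 1)
  have hX : (X + 1 : Polynomial ℝ).degree = 1 := by
    simpa using degree_X_add_C (1 : ℝ)
  have hq0 : q ≠ 0 := mul_ne_zero hp (by
    intro h0; rw [h0] at hX; simp at hX)
  have hqd : (r : WithBot ℕ) < q.degree := by
    have : q.degree = p.degree + 1 := by rw [degree_mul, hX]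
    rw [this, degree_eq_natDegree hp]
    rw [degree_eq_natDegree hp] at hcon
    have h5 : r ≤ p.natDegree := by exact_mod_cast hcon
    exact_mod_cast Nat.lt_succ_of_le h5
  have hd : (Polynomial.C K * (X + 1) ^ r).degree < q.degree := by
    refine lt_of_le_of_lt ?_ hqd
    have h7 : (Polynomial.C K : Polynomial ℝ).degree ≤ 0 := degree_C_le
    have h8 : ((X + 1 : Polynomial ℝ) ^ r).degree = r := by
      rw [degree_pow, hX]; simp
    refine (degree_mul_le _ _).trans ?_
    rw [h8]
    simpa using add_le_add_left h7 (r : WithBot ℕ)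
  have h1 := (div_tendsto_atTop_zero_of_degree_lt _ q hd).comp
    (tendsto_natCast_atTop_atTop (R := ℝ))
  have h2 := h1.abs
  rw [abs_zero] at h2
  have h3 := h2.eventually (gt_mem_nhds (zero_lt_one))
  have h4 := (tendsto_natCast_atTop_atTop (R := ℝ)).eventually (eventually_atTop_not_isRoot q hq0)
  obtain ⟨t, ht, ht'⟩ := (h3.and h4).exists
  simp only [Function.comp] at ht
  have hne : q.eval (t : ℝ) ≠ 0 := ht'
  rw [abs_div, div_lt_one (abs_pos.2 hne)] at ht
  have h5 := h t
  have h6 : |q.eval (t : ℝ)| = |p.eval (t : ℝ)| * (t + 1) := by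
    simp only [q, eval_mul, eval_add, eval_X, eval_one, abs_mul]
    rw [abs_of_pos (show (0 : ℝ) < t + 1 by positivity)]
  rw [h6] at ht
  simp only [eval_mul, eval_C, eval_pow, eval_add, eval_X, eval_one] at ht
  exact absurd (lt_of_le_of_lt (le_abs_self _) ht) (not_lt.2 h5)

/-- Monotonicity of the defect `∑ f{i} - f J`. -/
lemma defect_mono {n : ℕ} {f : Finset (Fin n) → ℕ} (hf : IsPolymatroidRank n f)
    {I J : Finset (Fin n)} (hIJ : I ⊆ J) :
    ∑ i ∈ I, f {i} + f J ≤ ∑ i ∈ J, f {i} + f I := by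
  have key : ∀ s : Finset (Fin n), f (I ∪ s) ≤ f I + ∑ i ∈ s, f {i} := by
    intro s
    induction s using Finset.induction_on with
    | empty => simp
    | insert x s hx ih =>
      rw [sum_insert hx]
      have h := hf.2.2 (I ∪ s) {x}
      have h2 : I ∪ insert x s = I ∪ s ∪ {x} := by
        ext; simp
      rw [h2]
      omega
  have h1 := key (J \ I)
  rw [Finset.union_sdiff_of_subset hIJ] at h1
  have h2 := Finset.sum_sdiff hIJ (f := fun i => f {i})
  omega

lemma Bset_upper {n : ℕ} {f : Finset (Fin n) → ℕ} (hf : IsPolymatroidRank n f)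
    (g : ℕ) (hg : g + f Finset.univ = ∑ i : Fin n, f {i}) (k : ℕ) (hk : k ≤ n - 1) (hn : 1 ≤ n)
    (h : ∀ J : Finset (Fin n), J.card = k → (∑ i ∈ J, f {i}) = f J) (t : ℕ) :
    (Bset n f (g + t)).card * (t + 1) ≤ (2 ^ n * (g + 1) ^ n) * (t + 1) ^ (n - 1 - k) := by
  classical
  set S : Finset (Finset (Fin n)) := univ.filter fun J => k < J.card ∧ J ≠ univ
  set R : Finset (Fin n) → Finset (Fin n → ℕ) := fun J =>
    (piAntidiag univ (g + t)).filter fun c => ∑ i ∈ J, c i < g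
  have hsub : Bset n f (g + t) ⊆ S.biUnion R := by
    intro c hc
    simp only [Bset, mem_filter, mem_piAntidiag, mem_univ, implies_true, and_true] at hc
    obtain ⟨hs, hc⟩ := hc
    unfold Indep at hc
    push Not at hc
    obtain ⟨J, hJ⟩ := hc
    have hJ' : ∑ i ∈ J, c i + f J < ∑ i ∈ J, f {i} := by
      rw [sum_sub_distrib] at hJ
      zify
      linarith
    have hlt : ∑ i ∈ J, c i < g := by
      have := defect_mono hf (subset_univ J)
      omega
    simp only [mem_biUnion, S, R, mem_filter, mem_univ, true_and, mem_piAntidiag, implies_true,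
      and_true]
    refine ⟨J, ⟨?_, ?_⟩, hs, hlt⟩
    · by_contra hcon
      push Not at hcon
      obtain ⟨J', hJJ', hcard⟩ := Finset.exists_superset_card_eq hcon (by simp; omega)
      have h1 := h J' hcard
      have h2 := defect_mono hf hJJ'
      omega
    · rintro rfl
      have hs1 : ∑ i, c i = g + t := hs
      omega
  have hR : ∀ J ∈ S, (R J).card * (t + 1) ≤ (g + 1) ^ n * (t + 1) ^ (n - 1 - k) := by
    intro J hJ
    simp only [S, mem_filter, mem_univ, true_and] at hJ
    obtain ⟨hkJ, hJu⟩ := hJ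
    obtain ⟨p, hp⟩ : ∃ p, p ∉ J := by
      by_contra hcon
      push Not at hcon
      exact hJu (by ext; simp [hcon])
    set B : Fin n → Finset ℕ := fun i =>
      if i = p then {0} else if i ∈ J then range g else range (g + t + 1)
    have hcard : (R J).card ≤ (Fintype.piFinset B).card := by
      refine Finset.card_le_card_of_injOn (fun c i => if i = p then 0 else c i) ?_ ?_
      · intro c hc
        simp only [R, coe_filter, mem_piAntidiag, mem_univ, implies_true, and_true,
          Set.mem_ofPred_eq] at hc
        simp only [Fintype.coe_piFinset, Set.mem_pi, Set.mem_univ, true_implies, B]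
        intro i
        by_cases hip : i = p
        · simp [hip]
        · by_cases hiJ : i ∈ J
          · have : c i ≤ ∑ i ∈ J, c i := Finset.single_le_sum (fun _ _ => Nat.zero_le _) hiJ
            simp only [hip, hiJ, if_true, if_false, coe_range, Set.mem_Iio]
            omega
          · have : c i ≤ ∑ i, c i := Finset.single_le_sum (fun _ _ => Nat.zero_le _) (mem_univ i)
            have hs1 : ∑ i, c i = g + t := hc.1
            simp only [hip, hiJ, if_false, coe_range, Set.mem_Iio]
            omega
      · intro c hc c' hc' heq
        simp only [R, coe_filter, mem_piAntidiag, mem_univ, implies_true, and_true,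
          Set.mem_ofPred_eq] at hc hc'
        have h1 : ∀ i, i ≠ p → c i = c' i := by
          intro i hi
          have := congrFun heq i
          simpa [hi] using this
        funext i
        by_cases hip : i = p
        · subst hip
          have h2 := Finset.add_sum_erase univ c (mem_univ i)
          have h3 := Finset.add_sum_erase univ c' (mem_univ i)
          have h4 : ∑ x ∈ univ.erase i, c x = ∑ x ∈ univ.erase i, c' x :=
            Finset.sum_congr rfl fun x hx => h1 x (Finset.ne_of_mem_erase hx)
          have hs1 : ∑ i, c i = g + t := hc.1
          have hs2 : ∑ i, c' i = g + t := hc'.1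
          omega
        · exact h1 i hip
    have hprod : (Fintype.piFinset B).card ≤
        ∏ i : Fin n, ((g + 1) * (if i ∈ insert p J then 1 else (t + 1))) := by
      rw [Fintype.card_piFinset]
      refine Finset.prod_le_prod' fun i _ => ?_
      simp only [B, mem_insert]
      by_cases hip : i = p
      · simp [hip]
      · by_cases hiJ : i ∈ J
        · simp [hip, hiJ]
        · simp only [hip, hiJ, if_false, card_range, or_self]
          nlinarith
    have hpe : ∏ i : Fin n, ((g + 1) * (if i ∈ insert p J then 1 else (t + 1))) =
        (g + 1) ^ n * (t + 1) ^ (n - (J.card + 1)) := by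
      rw [Finset.prod_mul_distrib, Finset.prod_const, Finset.prod_ite, Finset.prod_const_one,
        one_mul, Finset.prod_const, card_univ, Fintype.card_fin]
      congr 2
      have : (univ.filter fun i => i ∉ insert p J) = (insert p J)ᶜ := by
        ext; simp
      rw [this, Finset.card_compl, Fintype.card_fin, Finset.card_insert_of_notMem hp]
    have hJn : J.card + 1 ≤ n := by
      have := Finset.card_le_univ (insert p J)
      rwa [Finset.card_insert_of_notMem hp, Fintype.card_fin] at this
    calc (R J).card * (t + 1)
        ≤ ((g + 1) ^ n * (t + 1) ^ (n - (J.card + 1))) * (t + 1) :=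
          Nat.mul_le_mul_right _ (hcard.trans (hprod.trans hpe.le))
      _ = (g + 1) ^ n * (t + 1) ^ (n - (J.card + 1) + 1) := by rw [pow_succ]; ring
      _ ≤ _ := Nat.mul_le_mul_left _ (Nat.pow_le_pow_right (by omega) (by omega))
  calc (Bset n f (g + t)).card * (t + 1)
      ≤ (∑ J ∈ S, (R J).card) * (t + 1) :=
        Nat.mul_le_mul_right _ ((Finset.card_le_card hsub).trans Finset.card_biUnion_le)
    _ = ∑ J ∈ S, (R J).card * (t + 1) := by rw [sum_mul]
    _ ≤ S.card • ((g + 1) ^ n * (t + 1) ^ (n - 1 - k)) := Finset.sum_le_card_nsmul _ _ _ hR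
    _ ≤ 2 ^ n * ((g + 1) ^ n * (t + 1) ^ (n - 1 - k)) := by
        rw [smul_eq_mul]
        refine Nat.mul_le_mul_right _ ?_
        have := Finset.card_le_univ S
        simpa using this
    _ = _ := by ring

lemma Bset_lower {n : ℕ} {f : Finset (Fin n) → ℕ} (k : ℕ) (hk : k ≤ n - 1) (hn : 1 ≤ n)
    (J : Finset (Fin n)) (hJ : J.card = k) (hlt : f J < ∑ i ∈ J, f {i}) (g t : ℕ) :
    (t + (n - 1 - k)).choose (n - 1 - k) ≤ (Bset n f (g + t)).card := by
  classical
  have hsub : piAntidiag Jᶜ (g + t) ⊆ Bset n f (g + t) := by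
    intro c hc
    simp only [mem_piAntidiag] at hc
    obtain ⟨h1, h2⟩ := hc
    simp only [Bset, mem_filter, mem_piAntidiag, mem_univ, implies_true, and_true]
    have h0 : ∀ i ∈ J, c i = 0 := by
      intro i hi
      by_contra h
      exact (mem_compl.1 (h2 i h)) hi
    constructor
    · rw [← h1]; symm
      refine Finset.sum_subset (subset_univ _) fun i _ hi => h0 i ?_
      simpa using hi
    · intro hcon
      have h3 := hcon J
      rw [sum_sub_distrib, Finset.sum_eq_zero (f := fun i => (c i : ℤ))
        (fun i hi => by simp [h0 i hi]), sub_zero] at h3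
      have : (∑ i ∈ J, f {i}) ≤ f J := by exact_mod_cast h3
      omega
  have h1 := Finset.card_le_card hsub
  rw [card_piAntidiag_nat, Finset.card_compl, Fintype.card_fin, hJ,
    multichoose_eq_choose' _ _ (by omega), show n - k - 1 = n - 1 - k by omega] at h1
  refine le_trans (Nat.choose_le_choose _ (by omega)) h1

/-- With `g = ∑_{i ∈ [n]} f {i} - f [n]`, for every `k ≤ n - 1`:
`[x^i]I_P(x) = C(g+i-1, i)` for all `i ≤ k` iff `∑_{i ∈ J} f {i} = f J` for all
`J ⊆ [n]` with `|J| = k`. -/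
theorem stmt14 (n : ℕ) (f : Finset (Fin n) → ℕ) (hf : IsPolymatroidRank n f)
    (g : ℕ) (hg : g + f Finset.univ = ∑ i : Fin n, f {i})
    (k : ℕ) (hk : k ≤ n - 1) :
    (∀ i ≤ k, (interiorPoly n f).coeff i = ((g + i - 1).choose i : ℤ)) ↔
      ∀ J : Finset (Fin n), J.card = k → (∑ i ∈ J, f {i}) = f J := by
  have hwt : (∀ i ≤ k, (interiorPoly n f).coeff i = ((g + i - 1).choose i : ℤ)) ↔
      ∀ i ≤ k, wt n f g i = 0 := by
    refine forall₂_congr fun i _ => ?_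
    rw [wt, sub_eq_zero, eq_comm]
  rcases Nat.eq_zero_or_pos n with hn0 | hn
  · subst hn0
    obtain rfl : k = 0 := by omega
    have hR : ∀ J : Finset (Fin 0), J.card = 0 → (∑ i ∈ J, f {i}) = f J := by
      intro J hJ
      rw [Finset.card_eq_zero] at hJ
      subst hJ
      simp [hf.1]
    refine ⟨fun _ => hR, fun _ i hi => ?_⟩
    obtain rfl : i = 0 := by omega
    have hb : polyBases 0 f = {fun i => i.elim0} := by
      ext a
      rw [mem_polyBases_iff hf, mem_singleton]
      refine ⟨fun _ => Subsingleton.elim _ _, fun _ => ⟨fun J => ?_, ?_⟩⟩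
      · simp [Finset.eq_empty_of_isEmpty J]
      · simp [hf.1]
    simp [interiorPoly, hb]
  rw [hwt]
  have hev : ∀ t : ℕ, (Dpoly n (wt n f g)).eval (t : ℝ) = ((Bset n f (g + t)).card : ℝ) := by
    intro t
    rw [eval_Dpoly, ← card_Bset hf hn g hg t]
    simp
  constructor
  · intro hw J hJ
    by_contra hne
    have hle : f J ≤ ∑ i ∈ J, f {i} := by
      have := defect_mono hf (empty_subset J)
      simpa [hf.1] using this
    have hlt : f J < ∑ i ∈ J, f {i} := lt_of_le_of_ne hle (Ne.symm hne)
    have hd := Dpoly_degree_lt n _ k hk hn hw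
    refine not_degree_lt_of_le (Dpoly n (wt n f g)) (preHilbertPoly ℝ (n - 1 - k) 0) ?_ ?_ ?_
    · intro t
      rw [eval_preH]
      exact_mod_cast Nat.choose_pos (by omega)
    · intro t
      rw [eval_preH, hev, Nat.abs_cast]
      exact_mod_cast Bset_lower k hk hn J hJ hlt g t
    · have h0 : preHilbertPoly ℝ (n - 1 - k) 0 ≠ 0 := by
        intro h0
        have := coeff_preHilbertPoly_self ℝ (n - 1 - k) 0
        rw [h0, coeff_zero] at this
        exact inv_ne_zero (by exact_mod_cast Nat.factorial_ne_zero _) this.symm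
      rw [degree_eq_natDegree h0, natDegree_preHilbertPoly]
      exact hd
  · intro h
    refine weights_zero n _ k hk hn
      (degree_lt_of_bound _ ((2 ^ n * (g + 1) ^ n : ℕ) : ℝ) _ fun t => ?_)
    rw [hev, Nat.abs_cast]
    exact_mod_cast Bset_upper hf g hg k hk hn h t
end

section
/- Let 𝓗 = (V,E) be a connected hypergraph with associated bipartite graph Bip 𝓗, and set g = Σ_{e∈E} deg_{Bip 𝓗}(e) − |E| − |V| + 1. Then for every k ≤ |E|, the following are equivalent: (1) [x^i]I_𝓗(x) = C(g+i−1, i) for all i ≤ k; (2) the length of a shortest cycle of Bip 𝓗 is at least 2k+2. Here C(·,·) denotes the binomial coefficient. -/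
open Finset Polynomial

/-- The bipartite graph `Bip 𝓗` associated with the hypergraph `𝓗 = (V, E)` (hyperedges are
given as a family `E : Fin m → Finset V`, so that repeated hyperedges are allowed):
`v ∈ V` is adjacent to `e ∈ E` iff `v ∈ e`. -/
def bipGraph {V : Type*} (m : ℕ) (E : Fin m → Finset V) : SimpleGraph (V ⊕ Fin m) :=
  SimpleGraph.fromRel fun x y =>
    ∃ (v : V) (e : Fin m), v ∈ E e ∧ x = Sum.inl v ∧ y = Sum.inr e

/-- The vertex set of `Bip 𝓗|_{E'}`: the hyperedges in `E'` together with all vertices of `V`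
incident with an element of `E'`. -/
def bipVerts {V : Type*} (m : ℕ) (E : Fin m → Finset V) (E' : Finset (Fin m)) :
    Set (V ⊕ Fin m) :=
  {x | ∃ e ∈ E', x = Sum.inr e ∨ ∃ v ∈ E e, x = Sum.inl v}

/-- The graph `Bip 𝓗|_{E'}`: the subgraph of `Bip 𝓗` induced by `bipVerts`. -/
def restGraph {V : Type*} (m : ℕ) (E : Fin m → Finset V) (E' : Finset (Fin m)) :
    SimpleGraph (bipVerts m E E') :=
  SimpleGraph.induce (bipVerts m E E') (bipGraph m E)

/-- `c(E')`: the number of connected components of `Bip 𝓗|_{E'}`. -/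
noncomputable def compCount {V : Type*} (m : ℕ) (E : Fin m → Finset V)
    (E' : Finset (Fin m)) : ℕ :=
  Nat.card (restGraph m E E').ConnectedComponent

/-- The rank function `μ` of the hypergraphical polymatroid:
`μ(∅) = 0` and `μ(E') = |⋃ E'| - c(E')`. -/
noncomputable def muRank {V : Type*} [DecidableEq V] (m : ℕ) (E : Fin m → Finset V) :
    Finset (Fin m) → ℕ :=
  fun E' => (E'.biUnion E).card - compCount m E E'


namespace HG

/-! ### Polymatroid basics -/

lemma mem_polyBases {n : ℕ} {f : Finset (Fin n) → ℕ} (hf : IsPolymatroidRank n f)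
    {a : Fin n → ℤ} :
    a ∈ polyBases n f ↔ (∀ I : Finset (Fin n), ∑ i ∈ I, a i ≤ (f I : ℤ)) ∧
      ∑ i, a i = (f Finset.univ : ℤ) := by
  unfold polyBases
  rw [Finset.mem_filter]
  constructor
  · rintro ⟨_, _, h⟩; exact h
  · rintro ⟨h1, h2⟩
    have hnn : ∀ i, 0 ≤ a i := by
      intro i
      have h3 := h1 (Finset.univ.erase i)
      have h4 := hf.2.1 (Finset.univ.erase i) Finset.univ (Finset.erase_subset _ _)
      have h5 := Finset.add_sum_erase Finset.univ a (Finset.mem_univ i)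
      omega
    refine ⟨?_, hnn, h1, h2⟩
    rw [Finset.mem_image]
    have hle : ∀ i, a i ≤ f Finset.univ := by
      intro i
      rw [← h2]
      exact Finset.single_le_sum (fun j _ => hnn j) (Finset.mem_univ i)
    refine ⟨fun i => ⟨(a i).toNat, by have := hnn i; have := hle i; omega⟩,
      Finset.mem_univ _, ?_⟩
    funext i
    simp [hnn i]

/-- `c` is feasible: `c(I) ≤ f I` for every `I`. -/
def Feas (n : ℕ) (f : Finset (Fin n) → ℕ) (c : Fin n → ℤ) : Prop :=
  ∀ I : Finset (Fin n), ∑ i ∈ I, c i ≤ (f I : ℤ)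

/-- `X` is tight for `c`. -/
def Tight (n : ℕ) (f : Finset (Fin n) → ℕ) (c : Fin n → ℤ) (X : Finset (Fin n)) : Prop :=
  ∑ i ∈ X, c i = (f X : ℤ)

lemma tight_union_inter {n : ℕ} {f : Finset (Fin n) → ℕ} (hf : IsPolymatroidRank n f)
    {c : Fin n → ℤ} (hc : Feas n f c) {X Y : Finset (Fin n)} (hX : Tight n f c X)
    (hY : Tight n f c Y) : Tight n f c (X ∪ Y) ∧ Tight n f c (X ∩ Y) := by
  unfold Tight at *
  have h1 := hf.2.2 X Y
  have h2 := hc (X ∪ Y)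
  have h3 := hc (X ∩ Y)
  have h4 := Finset.sum_union_inter (s₁ := X) (s₂ := Y) (f := c)
  omega

lemma exists_raise {n : ℕ} {f : Finset (Fin n) → ℕ} (hf : IsPolymatroidRank n f)
    {c : Fin n → ℤ} (hc : Feas n f c) (hlt : ∑ i, c i < (f Finset.univ : ℤ)) :
    ∃ i, Feas n f (fun t => c t + if t = i then 1 else 0) := by
  classical
  have hne : (Finset.univ.filter (fun X => Tight n f c X)).Nonempty :=
    ⟨∅, Finset.mem_filter.2 ⟨Finset.mem_univ _, by simp [Tight, hf.1]⟩⟩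
  obtain ⟨X, hX, hmax⟩ := Finset.exists_max_image _ Finset.card hne
  simp only [Finset.mem_filter, Finset.mem_univ, true_and] at hX hmax
  have hXu : X ≠ Finset.univ := by
    rintro rfl
    unfold Tight at hX
    omega
  obtain ⟨i, hi⟩ : ∃ i, i ∉ X := by
    by_contra h
    push Not at h
    exact hXu (Finset.eq_univ_iff_forall.2 h)
  refine ⟨i, fun Y => ?_⟩
  rw [Finset.sum_add_distrib, Finset.sum_ite_eq' Y i]
  by_contra hcon
  have hY := hc Y
  split_ifs at hcon with hiY
  · have hYt : Tight n f c Y := by unfold Tight; omega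
    have := hmax _ (tight_union_inter hf hc hX hYt).1
    have h2 : X ⊂ X ∪ Y := by
      refine ⟨Finset.subset_union_left, fun h => hi (h (Finset.mem_union_right _ hiY))⟩
    have := Finset.card_lt_card h2
    omega
  · omega

lemma exists_base_ge {n : ℕ} {f : Finset (Fin n) → ℕ} (hf : IsPolymatroidRank n f) (s : ℕ) :
    ∀ {c : Fin n → ℤ}, Feas n f c → ∑ i, c i + s = (f Finset.univ : ℤ) →
    ∃ a ∈ polyBases n f, ∀ i, c i ≤ a i := by
  induction s with
  | zero =>
    intro c hc h
    exact ⟨c, (mem_polyBases hf).2 ⟨hc, by simpa using h⟩, fun i => le_rfl⟩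
  | succ s ih =>
    intro c hc h
    obtain ⟨i, hi⟩ := exists_raise hf hc (by push_cast at h; omega)
    obtain ⟨a, ha, hle⟩ := ih hi (by
      rw [Finset.sum_add_distrib, Finset.sum_ite_eq' Finset.univ i]
      push_cast at h; simp; omega)
    refine ⟨a, ha, fun j => ?_⟩
    have := hle j
    split_ifs at this <;> omega

lemma exists_base_active {n : ℕ} {f : Finset (Fin n) → ℕ} (hf : IsPolymatroidRank n f)
    {c : Fin n → ℤ} (hc : Feas n f c) :
    ∃ a ∈ polyBases n f, (∀ i, c i ≤ a i) ∧ ∀ i, i ∉ intAct n f a → c i = a i := by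
  classical
  have h0 := hc Finset.univ
  obtain ⟨a0, ha0, hle0⟩ := exists_base_ge hf ((f Finset.univ : ℤ) - ∑ i, c i).toNat hc
    (by omega)
  have hne : ((polyBases n f).filter (fun a => ∀ i, c i ≤ a i)).Nonempty :=
    ⟨a0, by simp [ha0, hle0]⟩
  obtain ⟨a, ha, hmin⟩ := Finset.exists_min_image _
    (fun a : Fin n → ℤ => ∑ i : Fin n, ((i : ℕ) : ℤ) * a i) hne
  simp only [Finset.mem_filter] at ha hmin
  refine ⟨a, ha.1, ha.2, fun i hi => ?_⟩
  by_contra hne'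
  have hlt : c i < a i := lt_of_le_of_ne (ha.2 i) hne'
  simp only [intAct, Finset.mem_filter, Finset.mem_univ, true_and] at hi
  push Not at hi
  obtain ⟨j, hji, hj⟩ := hi
  have := hmin _ ⟨hj, fun t => by
    have := ha.2 t
    by_cases h1 : t = i
    · subst h1; simp; split_ifs <;> omega
    · simp [h1]; split_ifs <;> omega⟩
  simp only [mul_add, mul_sub, Finset.sum_add_distrib, Finset.sum_sub_distrib, mul_ite, mul_one,
    mul_zero, Finset.sum_ite_eq', Finset.mem_univ, if_true] at this
  have : (j : ℕ) < i := hji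
  omega

lemma exchange {n : ℕ} {f : Finset (Fin n) → ℕ} (hf : IsPolymatroidRank n f)
    {a a' : Fin n → ℤ} (ha : a ∈ polyBases n f) (ha' : a' ∈ polyBases n f) {j : Fin n}
    (hj : a j < a' j) :
    ∃ i, a' i < a i ∧
      (fun t => a t - (if t = i then 1 else 0) + (if t = j then 1 else 0)) ∈ polyBases n f := by
  classical
  rw [mem_polyBases hf] at ha ha'
  have hne : (Finset.univ.filter (fun X => Tight n f a X ∧ j ∈ X)).Nonempty :=
    ⟨Finset.univ, Finset.mem_filter.2 ⟨Finset.mem_univ _, by simp [Tight, ha.2]⟩⟩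
  obtain ⟨X, hX, hmin⟩ := Finset.exists_min_image _ Finset.card hne
  simp only [Finset.mem_filter, Finset.mem_univ, true_and] at hX hmin
  have hsub : ∀ Y, Tight n f a Y → j ∈ Y → X ⊆ Y := by
    intro Y hY hjY
    have h1 := hmin (X ∩ Y) ⟨(tight_union_inter hf ha.1 hX.1 hY).2, Finset.mem_inter.2 ⟨hX.2, hjY⟩⟩
    have h2 := Finset.eq_of_subset_of_card_le Finset.inter_subset_left h1
    rw [← h2]; exact Finset.inter_subset_right
  have hex : ∃ i ∈ X, a' i < a i := by
    by_contra hcon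
    push Not at hcon
    have h1 : ∑ i ∈ X, a i < ∑ i ∈ X, a' i := Finset.sum_lt_sum hcon ⟨j, hX.2, hj⟩
    have h2 := ha'.1 X
    have h3 := hX.1
    unfold Tight at h3
    omega
  obtain ⟨i, hiX, hi⟩ := hex
  refine ⟨i, hi, (mem_polyBases hf).2 ⟨fun Y => ?_, ?_⟩⟩
  · rw [Finset.sum_add_distrib, Finset.sum_sub_distrib, Finset.sum_ite_eq' Y i,
      Finset.sum_ite_eq' Y j]
    have hY := ha.1 Y
    by_cases hjY : j ∈ Y
    · by_cases hiY : i ∈ Y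
      · simp [hiY, hjY, hY]
      · have : ¬ Tight n f a Y := fun h => hiY (hsub Y h hjY hiX)
        unfold Tight at this
        simp [hiY, hjY]; omega
    · simp [hjY]; split_ifs <;> omega
  · rw [Finset.sum_add_distrib, Finset.sum_sub_distrib, Finset.sum_ite_eq' Finset.univ i,
      Finset.sum_ite_eq' Finset.univ j]
    simp [ha.2]

lemma base_active_unique_aux {n : ℕ} {f : Finset (Fin n) → ℕ} (hf : IsPolymatroidRank n f)
    {a a' c : Fin n → ℤ} (ha : a ∈ polyBases n f) (ha' : a' ∈ polyBases n f)
    (hca' : ∀ i, c i ≤ a' i)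
    (h1 : ∀ i, i ∉ intAct n f a → c i = a i) {j : Fin n} (hj : a j < a' j)
    (hmin : ∀ i, i < j → a i = a' i) : False := by
  obtain ⟨i, hi, hmem⟩ := exchange hf ha ha' hj
  have hji : j < i := by
    rcases lt_trichotomy i j with h | h | h
    · have := hmin i h; omega
    · subst h; omega
    · exact h
  have hna : i ∉ intAct n f a := by
    simp only [intAct, Finset.mem_filter, Finset.mem_univ, true_and]
    push Not
    exact ⟨j, hji, hmem⟩
  have := h1 i hna
  have := hca' i
  omega

lemma base_active_unique {n : ℕ} {f : Finset (Fin n) → ℕ} (hf : IsPolymatroidRank n f)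
    {a a' c : Fin n → ℤ} (ha : a ∈ polyBases n f) (ha' : a' ∈ polyBases n f)
    (hca : ∀ i, c i ≤ a i) (hca' : ∀ i, c i ≤ a' i)
    (h1 : ∀ i, i ∉ intAct n f a → c i = a i) (h1' : ∀ i, i ∉ intAct n f a' → c i = a' i) :
    a = a' := by
  classical
  by_contra hne
  have hex : (Finset.univ.filter (fun i => a i ≠ a' i)).Nonempty := by
    obtain ⟨i, hi⟩ := Function.ne_iff.1 hne
    exact ⟨i, by simp [hi]⟩
  obtain ⟨j, hj, hmin⟩ := Finset.exists_min_image _ id hex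
  simp only [Finset.mem_filter, Finset.mem_univ, true_and, id] at hj hmin
  have hmin' : ∀ i, i < j → a i = a' i := by
    intro i hi
    by_contra h
    exact absurd (hmin i h) (not_le.2 hi)
  rcases lt_or_gt_of_ne hj with h | h
  · exact base_active_unique_aux hf ha ha' hca' h1 h hmin'
  · exact base_active_unique_aux hf ha' ha hca h1' h (fun i hi => (hmin' i hi).symm)

end HG

namespace HG

/-! ### Growth lemmas -/

lemma mc_identity (n g s : ℕ) :
    Nat.multichoose (n + 1) (g + s) =
      ∑ j ∈ Finset.range (n + 1), Nat.multichoose g j * Nat.multichoose (n - j + 1) s := by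
  induction g generalizing n with
  | zero =>
    rw [Finset.sum_range_succ']
    simp
  | succ g ihg =>
    induction n with
    | zero => simp
    | succ n ihn =>
      have e : g + 1 + s = (g + s) + 1 := by ring
      rw [e, Nat.multichoose_succ_succ, ihg, ← e, ihn]
      rw [Finset.sum_range_succ' _ (n + 1), Finset.sum_range_succ' _ (n + 1)]
      simp only [Nat.multichoose_succ_succ g, add_mul, Finset.sum_add_distrib,
        Nat.multichoose_zero_right, Nat.add_sub_add_right]
      ring

lemma mc_le (q s : ℕ) : Nat.multichoose (q + 1) s ≤ (s + 1) ^ q := by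
  induction q generalizing s with
  | zero => simp
  | succ q ihq =>
    induction s with
    | zero => simp
    | succ s ihs =>
      rw [Nat.multichoose_succ_succ]
      have h1 := ihq (s + 1)
      have h2 : (s + 1) ^ (q + 1) ≤ (s + 1 + 1) ^ q * (s + 1) := by
        rw [pow_succ]
        exact Nat.mul_le_mul_right _ (Nat.pow_le_pow_left (by omega) _)
      rw [pow_succ (s + 1 + 1) q]
      nlinarith

lemma le_mc (q s : ℕ) : s ^ q ≤ q.factorial * Nat.multichoose (q + 1) s := by
  rw [Nat.multichoose_eq, show q + 1 + s - 1 = q + s by omega, ← Nat.choose_symm_add,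
    ← Nat.descFactorial_eq_factorial_mul_choose]
  refine le_trans ?_ (Nat.pow_sub_le_descFactorial (q + s) q)
  exact Nat.pow_le_pow_left (by omega) _

/-- growth condition -/
def Gr (N k : ℕ) (u : ℕ → ℤ) : Prop :=
  ∃ C : ℕ, ∀ s : ℕ, 1 ≤ s → (s : ℤ) * |u s| ≤ C * (s : ℤ) ^ (N - k)

lemma Gr.sub {N k : ℕ} {u v : ℕ → ℤ} (hu : Gr N k u) (hv : Gr N k v) :
    Gr N k (fun s => u s - v s) := by
  obtain ⟨C, hC⟩ := hu
  obtain ⟨C', hC'⟩ := hv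
  refine ⟨C + C', fun s hs => ?_⟩
  have h1 := hC s hs
  have h2 := hC' s hs
  have h3 := abs_sub (u s) (v s)
  push_cast
  have : (s : ℤ) * |u s - v s| ≤ s * (|u s| + |v s|) := by gcongr
  linarith

lemma Gr.mono {N k j : ℕ} {u : ℕ → ℤ} (hu : Gr N k u) (hjk : j ≤ k) : Gr N j u := by
  obtain ⟨C, hC⟩ := hu
  refine ⟨C, fun s hs => (hC s hs).trans ?_⟩
  gcongr
  · exact_mod_cast hs

lemma gr_sum {ι : Type*} (N k : ℕ) (S : Finset ι) (u : ι → ℕ → ℤ) (h : ∀ i ∈ S, Gr N k (u i)) :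
    Gr N k (fun s => ∑ i ∈ S, u i s) := by
  classical
  induction S using Finset.induction_on with
  | empty => exact ⟨0, by simp⟩
  | insert i S hi ih =>
    obtain ⟨C, hC⟩ := h i (by simp)
    obtain ⟨C', hC'⟩ := ih (fun j hj => h j (by simp [hj]))
    refine ⟨C + C', fun s hs => ?_⟩
    have h1 := hC s hs
    have h2 := hC' s hs
    simp only at h2 ⊢
    rw [Finset.sum_insert hi]
    have h3 := abs_add_le (u i s) (∑ i ∈ S, u i s)
    push_cast
    have : (s : ℤ) * |u i s + ∑ i ∈ S, u i s| ≤ s * (|u i s| + |∑ i ∈ S, u i s|) := by gcongr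
    linarith

lemma gr_mul_mc (N k j : ℕ) (hkj : k < j) (hj : j ≤ N) (δ : ℤ) :
    Gr N k (fun s => δ * (Nat.multichoose (N - j + 1) s : ℤ)) := by
  refine ⟨δ.natAbs * 2 ^ (N - j), fun s hs => ?_⟩
  have h1 : ((Nat.multichoose (N - j + 1) s : ℕ) : ℤ) ≤ 2 ^ (N - j) * (s : ℤ) ^ (N - j) := by
    rw [← mul_pow]
    exact_mod_cast (mc_le (N - j) s).trans (Nat.pow_le_pow_left (show s + 1 ≤ 2 * s by omega) _)
  rw [abs_mul, Nat.abs_cast]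
  push_cast
  have h2 : (s : ℤ) * (s : ℤ) ^ (N - j) ≤ (s : ℤ) ^ (N - k) := by
    rw [← pow_succ']
    exact pow_le_pow_right₀ (by exact_mod_cast hs) (by omega)
  calc (s : ℤ) * (|δ| * (Nat.multichoose (N - j + 1) s : ℤ))
      ≤ s * (|δ| * (2 ^ (N - j) * (s : ℤ) ^ (N - j))) := by gcongr
    _ = |δ| * 2 ^ (N - j) * (s * (s : ℤ) ^ (N - j)) := by ring
    _ ≤ |δ| * 2 ^ (N - j) * (s : ℤ) ^ (N - k) := by gcongr

lemma not_gr_of_ge {N k p : ℕ} (hpk : p ≤ k) {u : ℕ → ℤ}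
    (h : ∀ s, ((Nat.multichoose (N - p + 1) s : ℕ) : ℤ) ≤ |u s|) : ¬ Gr N k u := by
  intro hu
  obtain ⟨C, hC⟩ := hu.mono hpk
  set F := (N - p).factorial
  set s := C * F + 1
  have h1 := hC s (by omega)
  have h2 := h s
  have h3 : ((s : ℤ)) ^ (N - p) ≤ F * (Nat.multichoose (N - p + 1) s : ℕ) := by
    exact_mod_cast le_mc (N - p) s
  have hs : (0 : ℤ) < (s : ℤ) ^ (N - p) := by positivity
  have h4 : (s : ℤ) * (s : ℤ) ^ (N - p) ≤ (F * C : ℤ) * (s : ℤ) ^ (N - p) := by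
    calc (s : ℤ) * (s : ℤ) ^ (N - p) ≤ s * (F * (Nat.multichoose (N - p + 1) s : ℕ)) := by gcongr
      _ ≤ s * (F * |u s|) := by gcongr
      _ = F * (s * |u s|) := by ring
      _ ≤ F * (C * (s : ℤ) ^ (N - p)) := by gcongr
      _ = _ := by ring
  have h5 := le_of_mul_le_mul_right h4 hs
  have h6 : (s : ℤ) = C * F + 1 := by simp [s]
  linarith

lemma gr_iff {N k : ℕ} (hk : k ≤ N) {δ : ℕ → ℤ} {u : ℕ → ℤ}
    (hu : ∀ s, u s = ∑ j ∈ Finset.range (N + 1), δ j * (Nat.multichoose (N - j + 1) s : ℤ)) :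
    Gr N k u ↔ ∀ j ≤ k, δ j = 0 := by
  have key : ∀ k, (∀ j ≤ k, δ j = 0) → Gr N k u := by
    intro k h
    have := gr_sum N k (Finset.range (N + 1))
      (fun j s => δ j * (Nat.multichoose (N - j + 1) s : ℤ)) (fun j hj => by
        by_cases hjk : j ≤ k
        · rw [h j hjk]; exact ⟨0, by simp⟩
        · exact gr_mul_mc N k j (by omega) (by simpa [Nat.lt_succ_iff] using hj) _)
    rw [show u = _ from funext hu]
    exact this
  refine ⟨fun h => ?_, key k⟩
  intro j
  induction j using Nat.strong_induction_on with
  | _ j ih =>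
    intro hjk
    by_contra hne
    have h1 : Gr N j (fun s => ∑ i ∈ (Finset.range (N + 1)).erase j,
        δ i * (Nat.multichoose (N - i + 1) s : ℤ)) := by
      apply gr_sum
      intro i hi
      simp only [Finset.mem_erase, Finset.mem_range] at hi
      rcases lt_or_gt_of_ne hi.1 with h2 | h2
      · rw [ih i h2 (by omega)]; exact ⟨0, by simp⟩
      · exact gr_mul_mc N j i h2 (by omega) _
    have h2 := (h.mono hjk).sub h1
    refine not_gr_of_ge le_rfl (fun s => ?_) h2
    simp only [hu]
    rw [← Finset.add_sum_erase (Finset.range (N + 1)) _ (Finset.mem_range.2 (show j < N + 1 by omega))]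
    rw [add_sub_cancel_right, abs_mul, Nat.abs_cast]
    have : 1 ≤ |δ j| := Int.one_le_abs hne
    nlinarith [Int.natCast_nonneg (Nat.multichoose (N - j + 1) s)]

/-! ### Counting vectors in a simplex -/

/-- vectors supported on `A` with sum at most `s`. -/
def T {n : ℕ} (A : Finset (Fin n)) (s : ℕ) : Finset (Fin n → ℕ) :=
  (Fintype.piFinset fun _ => Finset.range (s + 1)).filter
    (fun t => (∀ i, i ∉ A → t i = 0) ∧ ∑ i, t i ≤ s)

lemma mem_T {n : ℕ} {A : Finset (Fin n)} {s : ℕ} {t : Fin n → ℕ} :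
    t ∈ T A s ↔ (∀ i, i ∉ A → t i = 0) ∧ ∑ i, t i ≤ s := by
  unfold T
  rw [Finset.mem_filter]
  refine ⟨fun h => h.2, fun h => ⟨?_, h⟩⟩
  rw [Fintype.mem_piFinset]
  intro i
  have := Finset.single_le_sum (f := t) (fun j _ => Nat.zero_le _) (Finset.mem_univ i)
  simp; omega

lemma card_T {n : ℕ} (A : Finset (Fin n)) (s : ℕ) :
    (T A s).card = Nat.multichoose (A.card + 1) s := by
  induction A using Finset.induction_on generalizing s with
  | empty =>
    have : T (∅ : Finset (Fin n)) s = {0} := by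
      ext t
      rw [mem_T, Finset.mem_singleton]
      constructor
      · rintro ⟨h, -⟩; funext i; exact h i (by simp)
      · rintro rfl; simp
    simp [this]
  | insert i A hi ih =>
    induction s with
    | zero =>
      have : T (insert i A) 0 = {0} := by
        ext t
        rw [mem_T, Finset.mem_singleton]
        constructor
        · rintro ⟨-, h⟩
          funext j
          have := Finset.single_le_sum (f := t) (fun j _ => Nat.zero_le _) (Finset.mem_univ j)
          simp; omega
        · rintro rfl; simp
      simp [this]
    | succ s ihs =>
      have hsplit : T (insert i A) (s + 1) =
          T A (s + 1) ∪ (T (insert i A) s).image (fun t => t + Pi.single i 1) := by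
        ext t
        rw [Finset.mem_union, Finset.mem_image, mem_T, mem_T]
        constructor
        · rintro ⟨h1, h2⟩
          by_cases hti : t i = 0
          · left
            refine ⟨fun j hj => ?_, h2⟩
            by_cases hji : j = i
            · rw [hji]; exact hti
            · exact h1 j (by simp [hji, hj])
          · right
            have e : t = (t - Pi.single i 1) + Pi.single i 1 := by
              funext j
              by_cases hji : j = i
              · subst hji; simp; omega
              · simp [hji]
            refine ⟨t - Pi.single i 1, ?_, e.symm⟩
            rw [mem_T]
            refine ⟨fun j hj => ?_, ?_⟩
            · simp [h1 j hj]
            · rw [e] at h2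
              simp only [Pi.add_apply, Finset.sum_add_distrib, Finset.sum_pi_single',
                Finset.mem_univ, if_true] at h2
              omega
        · rintro (⟨h1, h2⟩ | ⟨t', ht', rfl⟩)
          · exact ⟨fun j hj => h1 j (fun h => hj (Finset.mem_insert_of_mem h)), h2⟩
          · rw [mem_T] at ht'
            refine ⟨fun j hj => ?_, ?_⟩
            · have : j ≠ i := by rintro rfl; simp at hj
              simp [ht'.1 j hj, this]
            · simp only [Pi.add_apply, Finset.sum_add_distrib, Finset.sum_pi_single',
                Finset.mem_univ, if_true]
              omega
      have hdisj : Disjoint (T A (s + 1))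
          ((T (insert i A) s).image (fun t => t + Pi.single i 1)) := by
        rw [Finset.disjoint_left]
        intro t h1 h2
        rw [Finset.mem_image] at h2
        obtain ⟨t', -, rfl⟩ := h2
        have := (mem_T.1 h1).1 i hi
        simp at this
      rw [hsplit, Finset.card_union_of_disjoint hdisj, ih,
        Finset.card_image_of_injective _ (add_left_injective _), ihs,
        Finset.card_insert_of_notMem hi, Nat.multichoose_succ_succ (A.card + 1) s]

end HG

namespace HG

/-! ### The coefficient theorem for polymatroids -/

/-- feasible vectors in dual coordinates. -/
def Qs (n : ℕ) (f : Finset (Fin n) → ℕ) (N : ℕ) : Finset (Fin n → ℕ) :=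
  (T Finset.univ N).filter (fun d => ∀ F : Finset (Fin n), ∑ i ∈ F, f {i} ≤ f F + ∑ i ∈ F, d i)

lemma card_Qs {n : ℕ} {f : Finset (Fin n) → ℕ} (hf : IsPolymatroidRank n f) {g : ℕ}
    (hg : g + f Finset.univ = ∑ i, f {i}) (s : ℕ) :
    (Qs n f (g + s)).card =
      ∑ a ∈ polyBases n f, Nat.multichoose ((intAct n f a).card + 1) s := by
  classical
  have hg' : (g : ℤ) + f Finset.univ = ∑ i, (f {i} : ℤ) := by exact_mod_cast hg
  have e : ∑ a ∈ polyBases n f, Nat.multichoose ((intAct n f a).card + 1) s =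
      ((polyBases n f).sigma (fun a => T (intAct n f a) s)).card := by
    rw [Finset.card_sigma]
    exact Finset.sum_congr rfl (fun a _ => (card_T _ _).symm)
  rw [e]
  symm
  have hle : ∀ a ∈ polyBases n f, ∀ i, a i ≤ f {i} := by
    intro a ha i
    simpa using ((mem_polyBases hf).1 ha).1 {i}
  have hcast : ∀ a ∈ polyBases n f, ∀ t : Fin n → ℕ, ∀ i,
      (((f {i} : ℤ) - a i + t i).toNat : ℤ) = (f {i} : ℤ) - a i + t i := by
    intro a ha t i
    have := hle a ha i
    omega
  refine Finset.card_bij (fun p _ => fun i => ((f {i} : ℤ) - p.1 i + p.2 i).toNat) ?_ ?_ ?_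
  · rintro ⟨a, t⟩ h
    rw [Finset.mem_sigma] at h
    obtain ⟨ha, ht⟩ := h
    simp only at ha ht
    rw [mem_T] at ht
    have hb := (mem_polyBases hf).1 ha
    simp only [Qs, Finset.mem_filter, mem_T]
    refine ⟨⟨by simp, ?_⟩, fun F => ?_⟩
    · zify
      rw [Finset.sum_congr rfl (fun i _ => hcast a ha t i), Finset.sum_add_distrib,
        Finset.sum_sub_distrib, ← hg', hb.2]
      have : ((∑ i, t i : ℕ) : ℤ) ≤ s := by exact_mod_cast ht.2
      push_cast at this
      linarith
    · zify
      rw [Finset.sum_congr rfl (fun i _ => hcast a ha t i), Finset.sum_add_distrib,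
        Finset.sum_sub_distrib]
      have h1 := hb.1 F
      have h2 : (0 : ℤ) ≤ ∑ i ∈ F, (t i : ℤ) := Finset.sum_nonneg (fun i _ => by positivity)
      linarith
  · rintro ⟨a, t⟩ h ⟨a', t'⟩ h' heq
    rw [Finset.mem_sigma] at h h'
    obtain ⟨ha, ht⟩ := h
    obtain ⟨ha', ht'⟩ := h'
    simp only at ha ht ha' ht' heq
    rw [mem_T] at ht ht'
    have hc : ∀ i, a i - t i = a' i - t' i := by
      intro i
      have h1 := hcast a ha t i
      have h2 := hcast a' ha' t' i
      have h3 := congrFun heq i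
      rw [h3] at h1
      omega
    have haa : a = a' := by
      refine base_active_unique hf (c := fun i => a i - t i) ha ha' (fun i => ?_) (fun i => ?_)
        (fun i hi => ?_) (fun i hi => ?_)
      · simp
      · rw [hc]; simp
      · simp [ht.1 i hi]
      · change a i - t i = a' i
        rw [hc]; simp [ht'.1 i hi]
    subst haa
    have : t = t' := by
      funext i
      have := hc i
      omega
    rw [this]
  · intro d hd
    simp only [Qs, Finset.mem_filter, mem_T] at hd
    have hfe : Feas n f (fun i => (f {i} : ℤ) - d i) := by
      intro F
      have := hd.2 F
      zify at this
      rw [Finset.sum_sub_distrib]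
      linarith
    obtain ⟨a, ha, h1, h2⟩ := exists_base_active hf hfe
    have h1' : ∀ i, (((a i - ((f {i} : ℤ) - d i)).toNat : ℕ) : ℤ) = a i - ((f {i} : ℤ) - d i) := by
      intro i
      have := h1 i
      omega
    refine ⟨⟨a, fun i => (a i - ((f {i} : ℤ) - d i)).toNat⟩, ?_, ?_⟩
    · rw [Finset.mem_sigma]
      refine ⟨ha, mem_T.2 ⟨fun i hi => ?_, ?_⟩⟩
      · have := h2 i hi
        change (a i - ((f {i} : ℤ) - d i)).toNat = 0
        omega
      · zify
        rw [Finset.sum_congr rfl (fun i _ => h1' i), Finset.sum_sub_distrib,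
          Finset.sum_sub_distrib, ← hg', ((mem_polyBases hf).1 ha).2]
        have : ((∑ i, d i : ℕ) : ℤ) ≤ ((g + s : ℕ) : ℤ) := by exact_mod_cast hd.1.2
        push_cast at this
        linarith
    · funext i
      simp only
      rw [h1']
      omega

lemma coeff_interior {n : ℕ} {f : Finset (Fin n) → ℕ} (i : ℕ) :
    (interiorPoly n f).coeff i =
      ∑ a ∈ polyBases n f, if i = n - (intAct n f a).card then (1 : ℤ) else 0 := by
  unfold interiorPoly
  rw [Polynomial.finsetSum_coeff]
  simp [Polynomial.coeff_X_pow]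

lemma card_Qs_coeff {n : ℕ} {f : Finset (Fin n) → ℕ} (hf : IsPolymatroidRank n f) {g : ℕ}
    (hg : g + f Finset.univ = ∑ i, f {i}) (s : ℕ) :
    ((Qs n f (g + s)).card : ℤ) =
      ∑ j ∈ Finset.range (n + 1), (interiorPoly n f).coeff j *
        (Nat.multichoose (n - j + 1) s : ℤ) := by
  rw [card_Qs hf hg]
  push_cast
  simp only [coeff_interior, Finset.sum_mul]
  rw [Finset.sum_comm]
  refine Finset.sum_congr rfl (fun a _ => ?_)
  have hc : (intAct n f a).card ≤ n := by simpa using Finset.card_le_univ (intAct n f a)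
  simp only [ite_mul, one_mul, zero_mul]
  rw [Finset.sum_ite_eq', if_pos (by simp), Nat.sub_sub_self hc]

lemma rank_le_sum {n : ℕ} {f : Finset (Fin n) → ℕ} (hf : IsPolymatroidRank n f)
    (F : Finset (Fin n)) : f F ≤ ∑ i ∈ F, f {i} := by
  induction F using Finset.induction_on with
  | empty => simp [hf.1]
  | insert i F hi ih =>
    rw [Finset.sum_insert hi]
    have := hf.2.2 {i} F
    rw [← Finset.insert_eq] at this
    omega

theorem coeff_iff {n : ℕ} {f : Finset (Fin n) → ℕ} (hf : IsPolymatroidRank n f) {g : ℕ}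
    (hg : g + f Finset.univ = ∑ i, f {i}) {k : ℕ} (hk : k ≤ n) :
    (∀ i ≤ k, (interiorPoly n f).coeff i = (Nat.multichoose g i : ℤ)) ↔
      ∀ F : Finset (Fin n), F.card ≤ k → f F = ∑ i ∈ F, f {i} := by
  classical
  set D : ℕ → Finset (Fin n → ℕ) := fun s => (T Finset.univ (g + s)).filter
    (fun d => ¬ ∀ F : Finset (Fin n), ∑ i ∈ F, f {i} ≤ f F + ∑ i ∈ F, d i) with hD
  have hu : ∀ s, ((D s).card : ℤ) = ∑ j ∈ Finset.range (n + 1),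
      ((Nat.multichoose g j : ℤ) - (interiorPoly n f).coeff j) *
        (Nat.multichoose (n - j + 1) s : ℤ) := by
    intro s
    simp only [sub_mul, Finset.sum_sub_distrib]
    rw [← card_Qs_coeff hf hg]
    have h1 := Finset.card_filter_add_card_filter_not (s := T (Finset.univ : Finset (Fin n)) (g + s))
      (fun d => ∀ F : Finset (Fin n), ∑ i ∈ F, f {i} ≤ f F + ∑ i ∈ F, d i)
    rw [card_T, Finset.card_univ, Fintype.card_fin, mc_identity] at h1
    have h2 : ((D s).card : ℤ) = ((∑ j ∈ Finset.range (n + 1), Nat.multichoose g j *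
        Nat.multichoose (n - j + 1) s : ℕ) : ℤ) - ((Qs n f (g + s)).card : ℤ) := by
      rw [← h1]
      simp only [hD, Qs]
      push_cast
      ring
    rw [h2]
    push_cast
    rfl
  have hgr := gr_iff hk hu
  have e1 : (∀ i ≤ k, (interiorPoly n f).coeff i = (Nat.multichoose g i : ℤ)) ↔
      ∀ j ≤ k, (Nat.multichoose g j : ℤ) - (interiorPoly n f).coeff j = 0 := by
    constructor
    · intro h j hj; rw [h j hj, sub_self]
    · intro h j hj; have := h j hj; omega
  rw [e1, ← hgr]
  constructor
  · intro h F hF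
    by_contra hne
    have hlt : f F < ∑ i ∈ F, f {i} := lt_of_le_of_ne (rank_le_sum hf F) hne
    refine not_gr_of_ge hF (fun s => ?_) h
    rw [Nat.abs_cast]
    have hc : (Finset.univ \ F).card = n - F.card := by
      rw [Finset.card_sdiff_of_subset (Finset.subset_univ _)]; simp
    rw [← hc, ← card_T]
    norm_cast
    apply Finset.card_le_card
    intro t ht
    rw [mem_T] at ht
    simp only [hD, Finset.mem_filter, mem_T]
    refine ⟨⟨by simp, by omega⟩, fun hcon => ?_⟩
    have h1 := hcon F
    rw [Finset.sum_eq_zero (s := F) (f := t) (fun i hi => ht.1 i (by simp [hi]))] at h1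
    omega
  · intro h
    -- upper bound
    set S := (Finset.univ : Finset (Finset (Fin n))).filter (fun F => k < F.card) with hS
    have hb : ∀ s, ((D s).card : ℤ) ≤ ∑ F ∈ S,
        (((∑ i ∈ F, f {i}) ^ F.card * (g + s + 1) ^ (n - F.card) : ℕ) : ℤ) := by
      intro s
      norm_cast
      have hsub : D s ⊆ S.biUnion (fun F => Fintype.piFinset (fun i =>
          if i ∈ F then Finset.range (∑ i ∈ F, f {i}) else Finset.range (g + s + 1))) := by
        intro d hd
        simp only [hD, Finset.mem_filter, mem_T] at hd
        obtain ⟨⟨-, h1⟩, h2⟩ := hd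
        push Not at h2
        obtain ⟨F, hF⟩ := h2
        rw [Finset.mem_biUnion]
        refine ⟨F, ?_, ?_⟩
        · simp only [hS, Finset.mem_filter, Finset.mem_univ, true_and]
          by_contra hcon
          have := h F (by omega)
          omega
        · rw [Fintype.mem_piFinset]
          intro i
          split_ifs with hi
          · have := Finset.single_le_sum (f := d) (fun j _ => Nat.zero_le _) hi
            rw [Finset.mem_range]; omega
          · have := Finset.single_le_sum (f := d) (fun j _ => Nat.zero_le _) (Finset.mem_univ i)
            rw [Finset.mem_range]; omega
      refine (Finset.card_le_card hsub).trans (Finset.card_biUnion_le.trans ?_)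
      refine Finset.sum_le_sum (fun F _ => ?_)
      rw [Fintype.card_piFinset]
      simp only [apply_ite Finset.card, Finset.card_range]
      rw [Finset.prod_ite, Finset.prod_const, Finset.prod_const]
      have h1 : (Finset.univ.filter (fun i => i ∈ F)) = F := by ext; simp
      have h2 : (Finset.univ.filter (fun i => i ∉ F)) = Finset.univ \ F := by ext; simp
      rw [h1, h2, Finset.card_sdiff_of_subset (Finset.subset_univ _)]
      simp
    have hgS : Gr n k (fun s => ∑ F ∈ S,
        (((∑ i ∈ F, f {i}) ^ F.card * (g + s + 1) ^ (n - F.card) : ℕ) : ℤ)) := by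
      apply gr_sum
      intro F hF
      simp only [hS, Finset.mem_filter, Finset.mem_univ, true_and] at hF
      have hFn : F.card ≤ n := by simpa using Finset.card_le_univ F
      refine ⟨(∑ i ∈ F, f {i}) ^ F.card * (g + 2) ^ (n - F.card), fun s hs => ?_⟩
      rw [Nat.abs_cast]
      norm_cast
      have h1 : (g + s + 1) ^ (n - F.card) ≤ (g + 2) ^ (n - F.card) * s ^ (n - F.card) := by
        rw [← mul_pow]
        exact Nat.pow_le_pow_left (by nlinarith) _
      have h2 : s * s ^ (n - F.card) ≤ s ^ (n - k) := by
        rw [← pow_succ']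
        exact Nat.pow_le_pow_right hs (by omega)
      set P := (∑ i ∈ F, f {i}) ^ F.card
      calc s * (P * (g + s + 1) ^ (n - F.card))
          ≤ s * (P * ((g + 2) ^ (n - F.card) * s ^ (n - F.card))) := by gcongr
        _ = P * (g + 2) ^ (n - F.card) * (s * s ^ (n - F.card)) := by ring
        _ ≤ _ := by gcongr
    obtain ⟨C, hC⟩ := hgS
    refine ⟨C, fun s hs => le_trans ?_ (hC s hs)⟩
    rw [Nat.abs_cast]
    have := (hb s).trans (le_abs_self _)
    gcongr

end HG

namespace HG

/-! ### The rank function of a hypergraph via linear algebra -/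

variable {V : Type*}

lemma adj_lr {m : ℕ} {E : Fin m → Finset V} {v : V} {e : Fin m} :
    (bipGraph m E).Adj (Sum.inl v) (Sum.inr e) ↔ v ∈ E e := by
  simp [bipGraph, SimpleGraph.fromRel_adj]

lemma adj_rl {m : ℕ} {E : Fin m → Finset V} {v : V} {e : Fin m} :
    (bipGraph m E).Adj (Sum.inr e) (Sum.inl v) ↔ v ∈ E e := by
  rw [SimpleGraph.adj_comm, adj_lr]

lemma not_adj_ll {m : ℕ} {E : Fin m → Finset V} {v w : V} :
    ¬ (bipGraph m E).Adj (Sum.inl v) (Sum.inl w) := by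
  simp [bipGraph, SimpleGraph.fromRel_adj]

lemma not_adj_rr {m : ℕ} {E : Fin m → Finset V} {e e' : Fin m} :
    ¬ (bipGraph m E).Adj (Sum.inr e) (Sum.inr e') := by
  simp [bipGraph, SimpleGraph.fromRel_adj]

/-- functions constant on `s` -/
def constOn (s : Finset V) : Submodule ℚ (V → ℚ) where
  carrier := {x | ∀ u ∈ s, ∀ v ∈ s, x u = x v}
  add_mem' := by
    intro x y hx hy u hu v hv
    simp [hx u hu v hv, hy u hu v hv]
  zero_mem' := by intro u _ v _; rfl
  smul_mem' := by
    intro c x hx u hu v hv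
    simp [hx u hu v hv]

lemma mem_constOn {s : Finset V} {x : V → ℚ} :
    x ∈ constOn s ↔ ∀ u ∈ s, ∀ v ∈ s, x u = x v := Iff.rfl

/-- functions constant on each hyperedge in `F` -/
def KK {m : ℕ} (E : Fin m → Finset V) (F : Finset (Fin m)) : Submodule ℚ (V → ℚ) where
  carrier := {x | ∀ e ∈ F, ∀ u ∈ E e, ∀ v ∈ E e, x u = x v}
  add_mem' := by
    intro x y hx hy e he u hu v hv
    simp [hx e he u hu v hv, hy e he u hu v hv]
  zero_mem' := by intro e _ u _ v _; rfl
  smul_mem' := by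
    intro c x hx e he u hu v hv
    simp [hx e he u hu v hv]

lemma mem_KK {m : ℕ} {E : Fin m → Finset V} {F : Finset (Fin m)} {x : V → ℚ} :
    x ∈ KK E F ↔ ∀ e ∈ F, ∀ u ∈ E e, ∀ v ∈ E e, x u = x v := Iff.rfl

lemma card_not_mem [Fintype V] [DecidableEq V] (s : Finset V) :
    Fintype.card {v // v ∉ s} + s.card = Fintype.card V := by
  rw [Fintype.card_subtype_compl, Fintype.card_coe]
  have := Finset.card_le_univ s
  omega

lemma finrank_constOn [Fintype V] [DecidableEq V] {s : Finset V} (hs : s.Nonempty) :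
    Module.finrank ℚ (constOn s) + s.card = Fintype.card V + 1 := by
  obtain ⟨v0, hv0⟩ := hs
  let Φ : constOn s ≃ₗ[ℚ] ({v // v ∉ s.erase v0} → ℚ) :=
    { toFun := fun x v => x.1 v.1
      map_add' := by intro x y; rfl
      map_smul' := by intro c x; rfl
      invFun := fun y => ⟨fun v => if h : v ∈ s.erase v0 then y ⟨v0, by simp⟩ else y ⟨v, h⟩, by
        have key : ∀ u ∈ s, (if h : u ∈ s.erase v0 then y ⟨v0, by simp⟩ else y ⟨u, h⟩)
            = y ⟨v0, by simp⟩ := by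
          intro u hu
          by_cases h : u = v0
          · subst h; simp
          · simp [h, hu]
        intro u hu v hv
        exact (key u hu).trans (key v hv).symm⟩
      left_inv := by
        intro x
        ext v
        by_cases h : v ∈ s.erase v0
        · simp only [h, dif_pos]
          exact x.2 v0 hv0 v (Finset.mem_of_mem_erase h)
        · simp only [h, dif_neg, not_false_iff]
      right_inv := by
        intro y
        funext v
        simp only
        rw [dif_neg v.2] }
  rw [Φ.finrank_eq, Module.finrank_pi]
  have h1 := card_not_mem (s.erase v0)
  have h2 := Finset.card_erase_add_one hv0
  omega

lemma inl_mem_bipVerts [DecidableEq V] {m : ℕ} {E : Fin m → Finset V} {F : Finset (Fin m)} {v : V}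
    (h : v ∈ F.biUnion E) : (Sum.inl v : V ⊕ Fin m) ∈ bipVerts m E F := by
  rw [Finset.mem_biUnion] at h
  obtain ⟨e, he, hv⟩ := h
  exact ⟨e, he, Or.inr ⟨v, hv, rfl⟩⟩

lemma inr_mem_bipVerts {m : ℕ} {E : Fin m → Finset V} {F : Finset (Fin m)} {e : Fin m}
    (h : e ∈ F) : (Sum.inr e : V ⊕ Fin m) ∈ bipVerts m E F :=
  ⟨e, h, Or.inl rfl⟩

lemma of_inr_mem_bipVerts {m : ℕ} {E : Fin m → Finset V} {F : Finset (Fin m)} {e : Fin m}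
    (h : (Sum.inr e : V ⊕ Fin m) ∈ bipVerts m E F) : e ∈ F := by
  obtain ⟨e', he', h | ⟨v, _, h⟩⟩ := h
  · cases h; exact he'
  · cases h

lemma of_inl_mem_bipVerts [DecidableEq V] {m : ℕ} {E : Fin m → Finset V} {F : Finset (Fin m)}
    {v : V} (h : (Sum.inl v : V ⊕ Fin m) ∈ bipVerts m E F) : v ∈ F.biUnion E := by
  obtain ⟨e', he', h | ⟨w, hw, h⟩⟩ := h
  · cases h
  · cases h; exact Finset.mem_biUnion.2 ⟨e', he', hw⟩

lemma rest_reach [DecidableEq V] {m : ℕ} {E : Fin m → Finset V} {F : Finset (Fin m)} {e : Fin m}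
    (he : e ∈ F) {v : V} (hv : v ∈ E e) (hv' : v ∈ F.biUnion E) :
    (restGraph m E F).Adj ⟨Sum.inl v, inl_mem_bipVerts hv'⟩ ⟨Sum.inr e, inr_mem_bipVerts he⟩ := by
  simp only [restGraph, SimpleGraph.comap_adj, Function.Embedding.subtype_apply]
  exact adj_lr.2 hv

/-- extension of a function from `V` to `V ⊕ Fin m` -/
noncomputable def ext {m : ℕ} {E : Fin m → Finset V} (hne : ∀ e : Fin m, (E e).Nonempty)
    (x : V → ℚ) : V ⊕ Fin m → ℚ
  | Sum.inl v => x v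
  | Sum.inr e => x (hne e).choose

lemma ext_adj {m : ℕ} {E : Fin m → Finset V} (hne : ∀ e : Fin m, (E e).Nonempty)
    {F : Finset (Fin m)} {x : V → ℚ} (hx : x ∈ KK E F) {p q : bipVerts m E F}
    (h : (restGraph m E F).Adj p q) : ext hne x p.1 = ext hne x q.1 := by
  obtain ⟨p, hp⟩ := p
  obtain ⟨q, hq⟩ := q
  simp only [restGraph, SimpleGraph.comap_adj, Function.Embedding.subtype_apply] at h
  rcases p with v | e <;> rcases q with w | e'
  · exact absurd h not_adj_ll
  · exact hx e' (of_inr_mem_bipVerts hq) _ (adj_lr.1 h) _ (hne e').choose_spec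
  · exact hx e (of_inr_mem_bipVerts hp) _ (hne e).choose_spec _ (adj_rl.1 h)
  · exact absurd h not_adj_rr

lemma ext_reach {m : ℕ} {E : Fin m → Finset V} (hne : ∀ e : Fin m, (E e).Nonempty)
    {F : Finset (Fin m)} {x : V → ℚ} (hx : x ∈ KK E F) {p q : bipVerts m E F}
    (h : (restGraph m E F).Walk p q) : ext hne x p.1 = ext hne x q.1 := by
  induction h with
  | nil => rfl
  | cons h _ ih => exact (ext_adj hne hx h).trans ih

lemma finrank_KK [Fintype V] [DecidableEq V] {m : ℕ} {E : Fin m → Finset V}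
    (hne : ∀ e : Fin m, (E e).Nonempty) (F : Finset (Fin m)) :
    Module.finrank ℚ (KK E F) =
      compCount m E F + Fintype.card {v // v ∉ F.biUnion E} := by
  classical
  let C := (restGraph m E F).ConnectedComponent
  let U := {v // v ∉ F.biUnion E}
  have : Finite C := by
    unfold C SimpleGraph.ConnectedComponent
    infer_instance
  have : Fintype C := Fintype.ofFinite C
  let Φ : KK E F ≃ₗ[ℚ] (C → ℚ) × (U → ℚ) :=
    { toFun := fun x => (fun c => c.lift (fun p => ext hne x.1 p.1)
          (fun p q w _ => ext_reach hne x.2 w), fun v => x.1 v.1)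
      map_add' := by
        intro x y
        ext c
        · induction c using SimpleGraph.ConnectedComponent.ind with
          | _ p =>
            obtain ⟨p, hp⟩ := p
            rcases p with v | e <;> rfl
        · rfl
      map_smul' := by
        intro t x
        ext c
        · induction c using SimpleGraph.ConnectedComponent.ind with
          | _ p =>
            obtain ⟨p, hp⟩ := p
            rcases p with v | e <;> rfl
        · rfl
      invFun := fun y => ⟨fun v => if h : v ∈ F.biUnion E then
          y.1 ((restGraph m E F).connectedComponentMk ⟨Sum.inl v, inl_mem_bipVerts h⟩)
          else y.2 ⟨v, h⟩, by
        intro e he u hu v hv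
        have hu' : u ∈ F.biUnion E := Finset.mem_biUnion.2 ⟨e, he, hu⟩
        have hv' : v ∈ F.biUnion E := Finset.mem_biUnion.2 ⟨e, he, hv⟩
        simp only [hu', hv', dif_pos]
        apply congrArg
        apply SimpleGraph.ConnectedComponent.sound
        exact (rest_reach he hu hu').reachable.trans (rest_reach he hv hv').reachable.symm⟩
      left_inv := by
        intro x
        ext v
        by_cases h : v ∈ F.biUnion E
        · simp only [h, dif_pos]
          rfl
        · simp only [h, dif_neg, not_false_iff]
      right_inv := by
        rintro ⟨y, z⟩
        ext c
        · induction c using SimpleGraph.ConnectedComponent.ind with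
          | _ p =>
            obtain ⟨p, hp⟩ := p
            simp only [SimpleGraph.ConnectedComponent.lift_mk]
            rcases p with v | e
            · simp only [ext]
              rw [dif_pos (of_inl_mem_bipVerts hp)]
            · simp only [ext]
              have he := of_inr_mem_bipVerts hp
              have hm : (hne e).choose ∈ F.biUnion E :=
                Finset.mem_biUnion.2 ⟨e, he, (hne e).choose_spec⟩
              rw [dif_pos hm]
              congr 1
              apply SimpleGraph.ConnectedComponent.sound
              exact (rest_reach he (hne e).choose_spec hm).reachable
        · simp only
          rw [dif_neg (Subtype.prop c)] }
  rw [Φ.finrank_eq, Module.finrank_prod, Module.finrank_pi, Module.finrank_pi]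
  unfold compCount
  rw [Nat.card_eq_fintype_card]

lemma muRank_add [Fintype V] [DecidableEq V] {m : ℕ} {E : Fin m → Finset V}
    (hne : ∀ e : Fin m, (E e).Nonempty) (F : Finset (Fin m)) :
    muRank m E F + Module.finrank ℚ (KK E F) = Fintype.card V := by
  have h1 := finrank_KK hne F
  have h2 := card_not_mem (F.biUnion E)
  have h3 : Module.finrank ℚ (KK E F) ≤ Fintype.card V := by
    have := Submodule.finrank_le (KK E F)
    rwa [Module.finrank_pi] at this
  unfold muRank
  omega

lemma KK_singleton {m : ℕ} {E : Fin m → Finset V} (e : Fin m) :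
    KK E {e} = constOn (E e) := by
  ext x
  simp [mem_KK, mem_constOn]

lemma muRank_singleton [Fintype V] [DecidableEq V] {m : ℕ} {E : Fin m → Finset V}
    (hne : ∀ e : Fin m, (E e).Nonempty) (e : Fin m) :
    muRank m E {e} + 1 = (E e).card := by
  have h1 := muRank_add hne {e}
  have h2 := finrank_constOn (hne e)
  rw [KK_singleton] at h1
  omega

lemma muRank_univ [Fintype V] [DecidableEq V] {m : ℕ} {E : Fin m → Finset V}
    (hne : ∀ e : Fin m, (E e).Nonempty) (hconn : (bipGraph m E).Connected) :
    muRank m E Finset.univ + 1 = Fintype.card V := by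
  have h1 := muRank_add hne Finset.univ
  have hV : Nonempty V := by
    obtain ⟨p⟩ := hconn.nonempty
    rcases p with v | e
    · exact ⟨v⟩
    · exact ⟨(hne e).choose⟩
  have hK : KK E Finset.univ = constOn (Finset.univ : Finset V) := by
    ext x
    constructor
    · intro hx u _ v _
      have key : ∀ p q, (bipGraph m E).Walk p q → ext hne x p = ext hne x q := by
        intro p q w
        induction w with
        | nil => rfl
        | @cons p q r h _ ih =>
          refine Eq.trans ?_ ih
          rcases p with v | e <;> rcases q with w | e'
          · exact absurd h not_adj_ll
          · exact hx e' (Finset.mem_univ _) _ (adj_lr.1 h) _ (hne e').choose_spec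
          · exact hx e (Finset.mem_univ _) _ (hne e).choose_spec _ (adj_rl.1 h)
          · exact absurd h not_adj_rr
      obtain ⟨w⟩ := hconn.preconnected (Sum.inl u) (Sum.inl v)
      exact key _ _ w
    · intro hx e _ u _ v _
      exact hx u (Finset.mem_univ _) v (Finset.mem_univ _)
  have h2 := finrank_constOn (Finset.univ_nonempty (α := V))
  rw [Finset.card_univ] at h2
  rw [hK] at h1
  omega

lemma KK_union [DecidableEq V] {m : ℕ} {E : Fin m → Finset V} (I J : Finset (Fin m)) :
    KK E (I ∪ J) = KK E I ⊓ KK E J := by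
  ext x
  simp only [Submodule.mem_inf, mem_KK, Finset.mem_union]
  constructor
  · intro h
    exact ⟨fun e he => h e (Or.inl he), fun e he => h e (Or.inr he)⟩
  · rintro ⟨h1, h2⟩ e (he | he)
    · exact h1 e he
    · exact h2 e he

lemma KK_mono {m : ℕ} {E : Fin m → Finset V} {I J : Finset (Fin m)} (h : I ⊆ J) :
    KK E J ≤ KK E I := fun _ hx e he => hx e (h he)

lemma muRank_isRank [Fintype V] [DecidableEq V] {m : ℕ} {E : Fin m → Finset V}
    (hne : ∀ e : Fin m, (E e).Nonempty) : IsPolymatroidRank m (muRank m E) := by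
  refine ⟨by simp [muRank], fun I J h => ?_, fun I J => ?_⟩
  · have h1 := muRank_add hne I
    have h2 := muRank_add hne J
    have h3 := Submodule.finrank_mono (KK_mono (E := E) h)
    omega
  · have h1 := muRank_add hne I
    have h2 := muRank_add hne J
    have h3 := muRank_add hne (I ∪ J)
    have h4 := muRank_add hne (I ∩ J)
    have h5 := Submodule.finrank_sup_add_finrank_inf_eq (KK E I) (KK E J)
    have h6 : KK E I ⊔ KK E J ≤ KK E (I ∩ J) :=
      sup_le (KK_mono Finset.inter_subset_left) (KK_mono Finset.inter_subset_right)
    have h7 := Submodule.finrank_mono h6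
    rw [← KK_union] at h5
    omega

end HG

namespace HG

/-! ### Cycles versus dependent sets of hyperedges -/

variable {V : Type*}

lemma walk_const {m : ℕ} {E : Fin m → Finset V} (L : ℕ) :
    ∀ (v v' : V) (q : (bipGraph m E).Walk (Sum.inl v) (Sum.inl v')), q.length = L →
    ∃ F : Finset (Fin m), 2 * F.card ≤ L ∧ (∀ e ∈ F, Sum.inr e ∈ q.support) ∧
      ∀ x ∈ KK E F, x v = x v' := by
  induction L using Nat.strong_induction_on with
  | _ L ih =>
    intro v v' q hq
    cases q with
    | nil => exact ⟨∅, by simp, by simp, fun _ _ => rfl⟩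
    | @cons _ b _ h1 q1 =>
      rcases b with w | e
      · exact absurd h1 not_adj_ll
      cases q1 with
      | @cons _ b _ h2 q2 =>
        rcases b with w | e'
        · simp only [SimpleGraph.Walk.length_cons] at hq
          obtain ⟨F, hF1, hF2, hF3⟩ := ih q2.length (by omega) w v' q2 rfl
          refine ⟨insert e F, ?_, ?_, ?_⟩
          · have := Finset.card_insert_le e F
            omega
          · intro e' he'
            rw [Finset.mem_insert] at he'
            rcases he' with rfl | he'
            · simp
            · simp [hF2 e' he']
          · intro x hx
            have a1 := hx e (Finset.mem_insert_self _ _) v (adj_lr.1 h1) w (adj_rl.1 h2)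
            rw [a1]
            exact hF3 x (KK_mono (Finset.subset_insert _ _) hx)
        · exact absurd h2 not_adj_rr

lemma dep_of_path [Fintype V] [DecidableEq V] {m : ℕ} {E : Fin m → Finset V}
    (hne : ∀ e : Fin m, (E e).Nonempty) {F : Finset (Fin m)} {e : Fin m} (he : e ∉ F)
    {v v' : V} (hv : v ∈ E e) (hv' : v' ∈ E e) (hvv : v ≠ v')
    (hx : ∀ x ∈ KK E F, x v = x v') :
    muRank m E (insert e F) < ∑ i ∈ insert e F, muRank m E {i} := by
  have hK : KK E (insert e F) = KK E F ⊓ constOn ((E e).erase v') := by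
    ext x
    rw [Submodule.mem_inf]
    constructor
    · intro h
      refine ⟨KK_mono (Finset.subset_insert _ _) h, fun a ha b hb => ?_⟩
      exact h e (Finset.mem_insert_self _ _) a (Finset.mem_of_mem_erase ha) b
        (Finset.mem_of_mem_erase hb)
    · rintro ⟨h1, h2⟩ i hi
      rw [Finset.mem_insert] at hi
      rcases hi with rfl | hi
      · have hvm : v ∈ (E i).erase v' := Finset.mem_erase.2 ⟨hvv, hv⟩
        have key : ∀ a ∈ E i, x a = x v := by
          intro a ha
          by_cases hav : a = v'
          · rw [hav]; exact (hx x h1).symm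
          · exact h2 a (Finset.mem_erase.2 ⟨hav, ha⟩) v hvm
        intro a ha b hb
        rw [key a ha, key b hb]
      · exact h1 i hi
  have h1 := muRank_add hne (insert e F)
  have h2 := muRank_add hne F
  have h3 := finrank_constOn (s := (E e).erase v') ⟨v, Finset.mem_erase.2 ⟨hvv, hv⟩⟩
  have h4 := Submodule.finrank_sup_add_finrank_inf_eq (KK E F) (constOn ((E e).erase v'))
  have h5 := Submodule.finrank_le (KK E F ⊔ constOn ((E e).erase v'))
  rw [Module.finrank_pi] at h5
  rw [← hK] at h4
  have h6 := Finset.card_erase_add_one hv'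
  have h7 := rank_le_sum (muRank_isRank hne) F
  have h8 := muRank_singleton hne e
  rw [Finset.sum_insert he]
  omega

lemma dep_of_cycle_inr [Fintype V] [DecidableEq V] {m : ℕ} {E : Fin m → Finset V}
    (hne : ∀ e : Fin m, (E e).Nonempty) (e : Fin m)
    (w : (bipGraph m E).Walk (Sum.inr e) (Sum.inr e)) (hw : w.IsCycle) :
    ∃ F : Finset (Fin m), 2 * F.card ≤ w.length ∧
      muRank m E F < ∑ i ∈ F, muRank m E {i} := by
  cases w with
  | nil => exact absurd hw (by simp)
  | @cons _ b _ h1 p =>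
    rcases b with v | e'
    swap
    · exact absurd h1 not_adj_rr
    rw [SimpleGraph.Walk.cons_isCycle_iff] at hw
    obtain ⟨hp, hed⟩ := hw
    obtain ⟨b, q, h2, rfl⟩ : ∃ (b : V ⊕ Fin m) (q : (bipGraph m E).Walk (Sum.inl v) b)
        (h2 : (bipGraph m E).Adj b (Sum.inr e)), p = q.concat h2 := by
      cases p with
      | cons h p' =>
        obtain ⟨b, q, h2, h⟩ := SimpleGraph.Walk.exists_cons_eq_concat h p'
        exact ⟨b, q, h2, h⟩
    rcases b with v' | e'
    swap
    · exact absurd h2 not_adj_rr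
    rw [SimpleGraph.Walk.concat_isPath_iff] at hp
    obtain ⟨F, hF1, hF2, hF3⟩ := walk_const q.length v v' q rfl
    have heF : e ∉ F := fun h => hp.2 (hF2 e h)
    refine ⟨insert e F, ?_, ?_⟩
    · rw [Finset.card_insert_of_notMem heF]
      simp only [SimpleGraph.Walk.length_cons, SimpleGraph.Walk.length_concat]
      omega
    · refine dep_of_path hne heF (adj_rl.1 h1) (adj_lr.1 h2) ?_ hF3
      rintro rfl
      apply hed
      simp [SimpleGraph.Walk.edges_concat, Sym2.eq_swap]

lemma dep_of_cycle [Fintype V] [DecidableEq V] {m : ℕ} {E : Fin m → Finset V}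
    (hne : ∀ e : Fin m, (E e).Nonempty) (u : V ⊕ Fin m)
    (w : (bipGraph m E).Walk u u) (hw : w.IsCycle) :
    ∃ F : Finset (Fin m), 2 * F.card ≤ w.length ∧
      muRank m E F < ∑ i ∈ F, muRank m E {i} := by
  rcases u with v | e
  · have hmem : ∃ e, Sum.inr e ∈ w.support := by
      cases w with
      | nil => exact absurd hw (by simp)
      | @cons _ b _ h1 p =>
        rcases b with v' | e
        · exact absurd h1 not_adj_ll
        · exact ⟨e, by simp⟩
    obtain ⟨e, he⟩ := hmem
    obtain ⟨F, hF1, hF2⟩ := dep_of_cycle_inr hne e (w.rotate _ he) (hw.rotate he)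
    refine ⟨F, ?_, hF2⟩
    rwa [SimpleGraph.Walk.length_rotate] at hF1
  · exact dep_of_cycle_inr hne e w hw

/-- the vertices are joined by a walk using only hyperedges in `F` -/
def Joined {m : ℕ} (E : Fin m → Finset V) (F : Finset (Fin m)) (v v' : V) : Prop :=
  ∃ q : (bipGraph m E).Walk (Sum.inl v) (Sum.inl v'), ∀ e, Sum.inr e ∈ q.support → e ∈ F

lemma Joined.symm {m : ℕ} {E : Fin m → Finset V} {F : Finset (Fin m)} {v v' : V}
    (h : Joined E F v v') : Joined E F v' v := by
  obtain ⟨q, hq⟩ := h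
  exact ⟨q.reverse, fun e he => hq e (by simpa using he)⟩

lemma Joined.trans {m : ℕ} {E : Fin m → Finset V} {F : Finset (Fin m)} {v v' v'' : V}
    (h : Joined E F v v') (h' : Joined E F v' v'') : Joined E F v v'' := by
  obtain ⟨q, hq⟩ := h
  obtain ⟨q', hq'⟩ := h'
  refine ⟨q.append q', fun e he => ?_⟩
  rw [SimpleGraph.Walk.mem_support_append_iff] at he
  exact he.elim (hq e) (hq' e)

lemma joined_of_mem {m : ℕ} {E : Fin m → Finset V} {F : Finset (Fin m)} {e : Fin m} (he : e ∈ F)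
    {u v : V} (hu : u ∈ E e) (hv : v ∈ E e) : Joined E F u v := by
  refine ⟨SimpleGraph.Walk.cons (adj_lr.2 hu) (SimpleGraph.Walk.cons (adj_rl.2 hv)
    SimpleGraph.Walk.nil), fun e' he' => ?_⟩
  simp at he'
  rw [he']; exact he

lemma walk_length {m : ℕ} {E : Fin m → Finset V} (L : ℕ) :
    ∀ (v v' : V) (q : (bipGraph m E).Walk (Sum.inl v) (Sum.inl v')), q.length = L →
    q.length = 2 * (q.support.filterMap Sum.getRight?).length := by
  induction L using Nat.strong_induction_on with
  | _ L ih =>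
    intro v v' q hq
    cases q with
    | nil => simp
    | @cons _ b _ h1 q1 =>
      rcases b with w | e
      · exact absurd h1 not_adj_ll
      cases q1 with
      | @cons _ b _ h2 q2 =>
        rcases b with w | e'
        · simp only [SimpleGraph.Walk.length_cons] at hq
          have := ih q2.length (by omega) w v' q2 rfl
          have e1 : (List.filterMap Sum.getRight? (Sum.inl v :: Sum.inr e :: q2.support)).length
              = (List.filterMap Sum.getRight? q2.support).length + 1 := by
            rw [List.filterMap_cons_none (by rfl), List.filterMap_cons_some (b := e) (by rfl),
              List.length_cons]
          simp only [SimpleGraph.Walk.length_cons, SimpleGraph.Walk.support_cons]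
          omega
        · exact absurd h2 not_adj_rr

lemma path_length_le {m : ℕ} {E : Fin m → Finset V} {F : Finset (Fin m)} {v v' : V}
    (q : (bipGraph m E).Walk (Sum.inl v) (Sum.inl v')) (hq : q.IsPath)
    (hF : ∀ e, Sum.inr e ∈ q.support → e ∈ F) : q.length ≤ 2 * F.card := by
  rw [walk_length q.length v v' q rfl]
  have hnd : (q.support.filterMap Sum.getRight?).Nodup := by
    apply List.Nodup.filterMap _ hq.support_nodup
    intro a a' b hb hb'
    rcases a with a | a <;> rcases a' with a' | a' <;> simp_all
  rw [← List.toFinset_card_of_nodup hnd]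
  have : (q.support.filterMap Sum.getRight?).toFinset ⊆ F := by
    intro e he
    rw [List.mem_toFinset, List.mem_filterMap] at he
    obtain ⟨a, ha, h⟩ := he
    rcases a with a | a
    · simp at h
    · simp at h
      subst h
      exact hF a ha
  have := Finset.card_le_card this
  omega

lemma cycle_of_joined {m : ℕ} {E : Fin m → Finset V} {F : Finset (Fin m)} {e : Fin m} (he : e ∉ F)
    {v v' : V} (hv : v ∈ E e) (hv' : v' ∈ E e) (hvv : v ≠ v') (hj : Joined E F v v') :
    ∃ w : (bipGraph m E).Walk (Sum.inr e) (Sum.inr e), w.IsCycle ∧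
      w.length ≤ 2 * F.card + 2 := by
  classical
  obtain ⟨q0, hq0⟩ := hj
  set q := q0.bypass with hqdef
  have hq : q.IsPath := q0.bypass_isPath
  have hqF : ∀ e, Sum.inr e ∈ q.support → e ∈ F :=
    fun e he => hq0 e (q0.support_bypass_subset_support he)
  have hen : Sum.inr e ∉ q.support := fun h => he (hqF e h)
  refine ⟨SimpleGraph.Walk.cons (adj_rl.2 hv) (q.concat (adj_lr.2 hv')), ?_, ?_⟩
  · rw [SimpleGraph.Walk.cons_isCycle_iff]
    refine ⟨hq.concat hen _, ?_⟩
    rw [SimpleGraph.Walk.edges_concat, List.concat_eq_append, List.mem_append]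
    rintro (h | h)
    · exact hen (q.fst_mem_support_of_mem_edges h)
    · simp at h
      exact hvv h
  · have := path_length_le q hq hqF
    simp only [SimpleGraph.Walk.length_cons, SimpleGraph.Walk.length_concat]
    omega

lemma indep_step [Fintype V] [DecidableEq V] {m : ℕ} {E : Fin m → Finset V}
    (hne : ∀ e : Fin m, (E e).Nonempty) {F : Finset (Fin m)} {e : Fin m}
    (hj : ∀ v ∈ E e, ∀ v' ∈ E e, Joined E F v v' → v = v') :
    muRank m E (insert e F) = muRank m E {e} + muRank m E F := by
  classical
  have htop : KK E F ⊔ constOn (E e) = ⊤ := by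
    rw [eq_top_iff]
    intro x _
    let y : V → ℚ := fun v =>
      if h : ∃ v', v' ∈ E e ∧ Joined E F v v' then x h.choose else 0
    have hy : y ∈ KK E F := by
      intro i hi u hu v hv
      have e1 : (fun v' => v' ∈ E e ∧ Joined E F u v') = (fun v' => v' ∈ E e ∧ Joined E F v v') := by
        funext v'
        apply propext
        constructor
        · rintro ⟨a, b⟩; exact ⟨a, (joined_of_mem hi hv hu).trans b⟩
        · rintro ⟨a, b⟩; exact ⟨a, (joined_of_mem hi hu hv).trans b⟩
      simp only [y, e1]
    have hye : ∀ v ∈ E e, y v = x v := by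
      intro v hv
      have h : ∃ v', v' ∈ E e ∧ Joined E F v v' :=
        ⟨v, hv, SimpleGraph.Walk.nil, by simp⟩
      simp only [y]
      rw [dif_pos h]
      rw [← hj v hv _ h.choose_spec.1 h.choose_spec.2]
    rw [Submodule.mem_sup]
    refine ⟨y, hy, x - y, ?_, by simp⟩
    intro u hu v hv
    simp [hye u hu, hye v hv]
  have hK : KK E (insert e F) = KK E F ⊓ constOn (E e) := by
    rw [Finset.insert_eq, KK_union, KK_singleton, inf_comm]
  have h1 := muRank_add hne (insert e F)
  have h2 := muRank_add hne F
  have h3 := muRank_add hne {e}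
  rw [KK_singleton] at h3
  have h4 := Submodule.finrank_sup_add_finrank_inf_eq (KK E F) (constOn (E e))
  rw [htop, finrank_top, Module.finrank_pi, ← hK] at h4
  omega

theorem indep_iff_girth [Fintype V] [DecidableEq V] {m : ℕ} {E : Fin m → Finset V}
    (hne : ∀ e : Fin m, (E e).Nonempty) (k : ℕ) :
    (∀ F : Finset (Fin m), F.card ≤ k → muRank m E F = ∑ i ∈ F, muRank m E {i}) ↔
      ∀ (u : V ⊕ Fin m) (w : (bipGraph m E).Walk u u), w.IsCycle → 2 * k + 2 ≤ w.length := by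
  constructor
  · intro h u w hw
    by_contra hlt
    obtain ⟨F, hF1, hF2⟩ := dep_of_cycle hne u w hw
    have := h F (by omega)
    omega
  · intro h F
    induction F using Finset.induction_on with
    | empty => intro _; simp [muRank]
    | insert e F he ih =>
      intro hc
      rw [Finset.card_insert_of_notMem he] at hc
      rw [Finset.sum_insert he, ← ih (by omega)]
      apply indep_step hne
      intro v hv v' hv' hj
      by_contra hvv
      obtain ⟨w, hw, hl⟩ := cycle_of_joined he hv hv' hvv hj
      have := h _ w hw
      omega

end HG

/-- For a connected hypergraph `𝓗 = (V, E)` with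
`g = ∑_{e ∈ E} deg_{Bip 𝓗}(e) - |E| - |V| + 1` and every `k ≤ |E|`:
`[x^i]I_𝓗(x) = C(g+i-1, i)` for all `i ≤ k` iff every cycle of `Bip 𝓗` has length at
least `2k+2` (i.e. the girth of `Bip 𝓗` is at least `2k+2`). -/
theorem stmt15 {V : Type*} [Fintype V] [DecidableEq V] (m : ℕ) (E : Fin m → Finset V)
    (hne : ∀ e : Fin m, (E e).Nonempty) (hconn : (bipGraph m E).Connected)
    (g : ℕ) (hg : g + m + Fintype.card V = (∑ e : Fin m, (E e).card) + 1)
    (k : ℕ) (hk : k ≤ m) :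
    (∀ i ≤ k, (interiorPoly m (muRank m E)).coeff i = ((g + i - 1).choose i : ℤ)) ↔
      ∀ (u : V ⊕ Fin m) (w : (bipGraph m E).Walk u u), w.IsCycle →
        2 * k + 2 ≤ w.length := by
  have hg' : g + muRank m E Finset.univ = ∑ i, muRank m E {i} := by
    have h1 : ∑ e : Fin m, (E e).card = ∑ e : Fin m, (muRank m E {e} + 1) :=
      Finset.sum_congr rfl (fun e _ => (HG.muRank_singleton hne e).symm)
    rw [Finset.sum_add_distrib] at h1
    simp only [Finset.sum_const, Finset.card_univ, Fintype.card_fin, smul_eq_mul, mul_one] at h1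
    have h2 := HG.muRank_univ hne hconn
    omega
  rw [← HG.indep_iff_girth hne k, ← HG.coeff_iff (HG.muRank_isRank hne) hg' hk]
  simp only [Nat.multichoose_eq]
end
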